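/- Let $\mathbb{R}_{\max}=\mathbb{R}\cup\{-\infty\}$, and for a $d\times d$ matrix $M$ over $\mathbb{R}_{\max}$ and a vector $v$ write $(M\otimes v)_i=\max_j(M_{ij}+v_j)$. Let $(A(n))_{n\in\mathbb{Z}}$ be a stationary and ergodic sequence of random $d\times d$ matrices with entries in $\mathbb{R}_{\max}$, almost surely having at least one finite entry on each row, such that the positive part of $\max_{ij}A_{ij}(0)$ is integrable. Put $y(n,0)=A(-1)\otimes\cdots\otimes A(-n)\otimes 0$, where $0$ is the zero vector. For a set $s$ of indices, let $\gamma(A^{(s)})\in\mathbb{R}_{\max}$ be the maximal Lyapunov exponent of the submatrices $A^{(s)}(n)=(A_{ij}(n))_{i,j\in s}$, that is, the almost-sure (constant) limit of $\frac1n\max_{i\in s}\bigl(A^{(s)}(n-1)\otimes\cdots\otimes A^{(s)}(0)\otimes 0\bigr)_i$. Let $\mathcal{G}(A)$ be the directed graph on $\{1,\dots,d\}$ with an arc $(i,j)$ whenever $\mathbb{P}(A_{ij}(0)\neq-\infty)>0$; its strongly connected components are the classes of mutually reachable nodes (a node on no circuit is alone in its component). Write $\to$ for reachability in $\mathcal{G}(A)$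 by a path, possibly of length zero, between nodes or components. For a strongly connected component $c$ let $\gamma^{(c)}=\gamma(A^{(c)})$, $\gamma^{[c]}=\max\{\gamma^{(\tilde c)}: c\to\tilde c\}$, and $$H_c=\{i : \text{there is a strongly connected component } \tilde c \text{ with } c\to i\to\tilde c \text{ and } \gamma^{(\tilde c)}=\gamma^{[c]}\}.$$ If $\frac1n\,y(n,0)$ converges almost surely to a deterministic vector (entries $-\infty$ being allowed in the limit), then for every strongly connected component $c$ of $\mathcal{G}(A)$, the submatrix $A^{\{c\}}=(A_{ij}(0))_{i,j\in H_c}$ almost surely has at least one finite entry on each row. -/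

import Mathlib

open Filter MeasureTheory Topology

noncomputable section

namespace MaxPlus

/-- A square matrix indexed by `ι` over `ℝ_max = ℝ ∪ {-∞}`. The semiring is realised inside `EReal`,
with `⊥ = -∞`; the theorem assumes that the value `⊤` is not taken. -/
abbrev Mat (ι : Type*) := ι → ι → EReal

/-- Max-plus product of a matrix and a vector: `(M ⊗ v)_i = max_j (M_ij + v_j)`. -/
def mulVec {ι : Type*} (M : Mat ι) (v : ι → EReal) : ι → EReal :=
  fun i => ⨆ j, M i j + v j

/-- `applyProd n f v = f 0 ⊗ f 1 ⊗ ⋯ ⊗ f (n-1) ⊗ v`. -/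
def applyProd {ι : Type*} : ℕ → (ℕ → Mat ι) → (ι → EReal) → ι → EReal
  | 0, _, v => v
  | n + 1, f, v => mulVec (f 0) (applyProd n (fun k => f (k + 1)) v)

/-- `x(n, 0) = A(n-1) ⊗ ⋯ ⊗ A(0) ⊗ 0`. -/
def xvec {ι : Type*} (A : ℤ → Mat ι) : ℕ → ι → EReal
  | 0 => fun _ => 0
  | n + 1 => mulVec (A n) (xvec A n)

/-- `y(n, 0) = A(-1) ⊗ A(-2) ⊗ ⋯ ⊗ A(-n) ⊗ 0`. -/
def yvec {ι : Type*} (A : ℤ → Mat ι) (n : ℕ) : ι → EReal :=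
  applyProd n (fun k => A (-((k : ℤ) + 1))) (fun _ => 0)

/-- `(1/n) x` for `x ∈ ℝ ∪ {-∞}`. -/
def scale (n : ℕ) (x : EReal) : EReal := (((n : ℝ)⁻¹ : ℝ) : EReal) * x

variable {Ω : Type*} [MeasurableSpace Ω]

/-- The sequence of random matrices `(A(n))_{n ∈ ℤ}` is stationary and ergodic: the shift preserves
the law of the whole two-sided sequence and is ergodic for it. -/
def IsStationaryErgodic {ι : Type*} (μ : Measure Ω) (A : ℤ → Ω → Mat ι) : Prop :=
  Ergodic (fun (f : ℤ → Mat ι) (n : ℤ) => f (n + 1)) (μ.map (fun ω n => A n ω))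

/-- `g` is the almost-sure limit of `(1/n) max_i x_i(n, 0)`. -/
def IsLyapunovExponent {ι : Type*} (μ : Measure Ω) (A : ℤ → Ω → Mat ι) (g : EReal) : Prop :=
  ∀ᵐ ω ∂μ, Tendsto (fun n : ℕ => scale n (⨆ i, xvec (fun m => A m ω) n i)) atTop (𝓝 g)

open Classical in
/-- The maximal Lyapunov exponent `γ(A)`: the constant which is the almost-sure limit of
`(1/n) max_i x_i(n, 0)` (with the irrelevant value `-∞` if there is no such constant). -/
def lyapunov {ι : Type*} (μ : Measure Ω) (A : ℤ → Ω → Mat ι) : EReal :=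
  if h : ∃ g, IsLyapunovExponent μ A g then h.choose else ⊥

theorem IsLyapunovExponent.lyapunov_eq {ι : Type*} {μ : Measure Ω} [IsProbabilityMeasure μ]
    {A : ℤ → Ω → Mat ι} {g : EReal} (hg : IsLyapunovExponent μ A g) : lyapunov μ A = g := by
  have h : ∃ g, IsLyapunovExponent μ A g := ⟨g, hg⟩
  have h' : IsLyapunovExponent μ A (lyapunov μ A) := by
    rw [lyapunov, dif_pos h]
    exact h.choose_spec
  obtain ⟨ω, h₁, h₂⟩ := (h'.and hg).exists
  exact tendsto_nhds_unique h₁ h₂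

/-- The arcs of the graph `𝒢(A)`: `(i, j)` is an arc iff `ℙ(A_ij(0) ≠ -∞) > 0`. -/
def Arc {ι : Type*} (μ : Measure Ω) (A : ℤ → Ω → Mat ι) (i j : ι) : Prop :=
  0 < μ {ω | A 0 ω i j ≠ ⊥}

/-- There is a path, possibly of length zero, from `i` to `j` in `𝒢(A)`. -/
def Reach {ι : Type*} (μ : Measure Ω) (A : ℤ → Ω → Mat ι) (i j : ι) : Prop :=
  Relation.ReflTransGen (Arc μ A) i j

/-- `c` is a strongly connected component of `𝒢(A)`, that is, a class of mutually reachable nodes;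
a node on no circuit is alone in its class. -/
def IsSCC {ι : Type*} (μ : Measure Ω) (A : ℤ → Ω → Mat ι) (c : Set ι) : Prop :=
  ∃ i, c = {j | Reach μ A i j ∧ Reach μ A j i}

/-- `c → c'` : some node of `c` reaches some node of `c'`. -/
def SetReach {ι : Type*} (μ : Measure Ω) (A : ℤ → Ω → Mat ι) (c c' : Set ι) : Prop :=
  ∃ i ∈ c, ∃ j ∈ c', Reach μ A i j

/-- The submatrices `(A_ij(n))_{i, j ∈ s}`. -/
def sub {ι : Type*} (A : ℤ → Ω → Mat ι) (s : Set ι) : ℤ → Ω → Mat s :=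
  fun n ω i j => A n ω i j

/-- `γ^{(c)} = γ(A^{(c)})`. -/
def gammaComp {ι : Type*} (μ : Measure Ω) (A : ℤ → Ω → Mat ι) (c : Set ι) : EReal :=
  lyapunov μ (sub A c)

/-- `γ^{[c]} = max {γ^{(c')} : c → c'}`, the maximum being over strongly connected components. -/
def gammaDown {ι : Type*} (μ : Measure Ω) (A : ℤ → Ω → Mat ι) (c : Set ι) : EReal :=
  ⨆ c' ∈ {c' : Set ι | IsSCC μ A c' ∧ SetReach μ A c c'}, gammaComp μ A c'

/-- `H_c`: the nodes `i` such that `c → i → c'` for some strongly connected component `c'` with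
`γ^{(c')} = γ^{[c]}`. -/
def H {ι : Type*} (μ : Measure Ω) (A : ℤ → Ω → Mat ι) (c : Set ι) : Set ι :=
  {i | ∃ c', IsSCC μ A c' ∧ SetReach μ A c {i} ∧ SetReach μ A {i} c' ∧
    gammaComp μ A c' = gammaDown μ A c}

/-- Every row of the matrix has an entry different from `-∞`. -/
def RowFinite {ι : Type*} (M : Mat ι) : Prop :=
  ∀ i, ∃ j, M i j ≠ ⊥

end MaxPlus

end

/-!
Write `L` for the limit of `y(n, 0) / n`. Since `y(n + 1, 0)` is the product of `A(-1)` with a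
translate of `y(n, 0)` having the same limit, almost surely
`L i = max {L j : A_ij(0) ≠ -∞}` for every `i`; in particular `L` decreases along the arcs.

The heart of the matter is the identity `L i = γ^{[i]}`. The inequality `γ^{(c)} ≤ max_{j ∈ c} L j`
is clear, because backward products have the same growth rate as forward ones: both rates exist by
Kingman's theorem, and they agree by recurrence. Conversely, among the nodes reachable from `i` with
`L k = L i`, choose `k` reaching as few nodes as possible. The nodes reachable from `k` split into
the component of `k` and a closed set `V` where `L < L i`. The growth rate of a block triangular
system is at most the maximum of those of its diagonal blocks, and the rate on `V` is at most
`max_V L < L i`, so `L i ≤ γ^{(c)}` for the component `c` of `k`.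

Hence `H_c = {i : c → i, L i = γ^{[c]}}`, and the maximum in the equation for `L i` is attained at
some `j` with `A_ij(0) ≠ -∞` and `L j = L i`, which lies in `H_c` if `i` does.
-/

open scoped ENNReal

/-! ### Kingman's subadditive ergodic theorem -/

/-- A subadditive process over the dynamical system `T`, in the sense of Kingman: `f n z` is a
cost of the orbit segment `z, T z, …, T^[n-1] z`, and cutting a segment does not decrease costs.
The empty segment is allowed a negative cost. -/
structure IsSubadditiveProcess {Z E : Type*} [AddZeroClass E] [LE E] (T : Z → Z) (f : ℕ → Z → E) :
    Prop where
  zero_le : ∀ z, f 0 z ≤ 0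
  add_le : ∀ m n z, f (m + n) z ≤ f m z + f n (T^[m] z)

theorem isSubadditiveProcess_birkhoffSum {Z E : Type*} [AddCommMonoid E] [Preorder E] (T : Z → Z)
    (g : Z → E) : IsSubadditiveProcess T (birkhoffSum T g) where
  zero_le z := (birkhoffSum_zero T g z).le
  add_le m n z := (birkhoffSum_add T g m n z).le

theorem isSubadditiveProcess_natCast_mul {Z : Type*} (T : Z → Z) (r : ℝ≥0∞) :
    IsSubadditiveProcess T fun n _ => (n : ℝ≥0∞) * r where
  zero_le _ := by simp
  add_le m n _ := by rw [Nat.cast_add, add_mul]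

/-- The points `z` from which no orbit segment of length at most `M + 1` has its cost `f` bounded
by the Birkhoff sum of `h`. -/
def untiled {Z : Type*} (T : Z → Z) (f : ℕ → Z → ℝ≥0∞) (h : Z → ℝ≥0∞) (M : ℕ) : Set Z :=
  {z | ∀ k ≤ M, birkhoffSum T h (k + 1) z < f (k + 1) z}

section Tiling

variable {Z : Type*} {T : Z → Z} {f : ℕ → Z → ℝ≥0∞}

namespace IsSubadditiveProcess

theorem le_birkhoffSum (hf : IsSubadditiveProcess T f) (n : ℕ) (z : Z) :
    f n z ≤ birkhoffSum T (f 1) n z := by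
  induction n with
  | zero => simpa using hf.zero_le z
  | succ n ih =>
    rw [birkhoffSum_succ]
    exact (hf.add_le n 1 z).trans (add_le_add_left ih _)

theorem div_le_add (hf : IsSubadditiveProcess T f) (n : ℕ) (z : Z) :
    f (n + 1) z / (n + 1 : ℕ) ≤ f n (T z) / n + f 1 z / (n + 1 : ℕ) := by
  have h : f (n + 1) z ≤ f 1 z + f n (T z) := by simpa [add_comm] using hf.add_le 1 n z
  calc f (n + 1) z / (n + 1 : ℕ) ≤ (f 1 z + f n (T z)) / (n + 1 : ℕ) := by gcongr
    _ = f n (T z) / (n + 1 : ℕ) + f 1 z / (n + 1 : ℕ) := by rw [ENNReal.add_div, add_comm]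
    _ ≤ f n (T z) / n + f 1 z / (n + 1 : ℕ) := by gcongr; omega

theorem exists_le_birkhoffSum_add_indicator (h : Z → ℝ≥0∞) (M : ℕ) (z : Z) :
    ∃ k ≤ M, f (k + 1) z ≤ birkhoffSum T (h + (untiled T f h M).indicator (f 1)) (k + 1) z := by
  by_cases hz : z ∈ untiled T f h M
  · exact ⟨0, M.zero_le, by simp [Set.indicator_of_mem hz]⟩
  · simp only [untiled, Set.mem_ofPred_eq, not_forall, not_lt] at hz
    obtain ⟨k, hkM, hk⟩ := hz
    exact ⟨k, hkM, hk.trans (Finset.sum_le_sum fun _ _ => le_self_add)⟩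

/-- Cover the segment greedily by tiles on which `f` is at most the Birkhoff sum of `h`, paying
`f 1` at the untiled points and at the end of the segment, where a tile may not fit. -/
theorem le_birkhoffSum_add_sum_Ico (hf : IsSubadditiveProcess T f) (h : Z → ℝ≥0∞) (M n : ℕ)
    (z : Z) :
    f n z ≤ birkhoffSum T (h + (untiled T f h M).indicator (f 1)) n z +
      ∑ k ∈ Finset.Ico (n - (M + 1)) n, f 1 (T^[k] z) := by
  induction n using Nat.strong_induction_on generalizing z with
  | _ n ih =>
  rcases le_or_gt n (M + 1) with hn | hn
  · rw [Nat.sub_eq_zero_of_le hn, ← Finset.range_eq_Ico]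
    exact (hf.le_birkhoffSum n z).trans le_add_self
  obtain ⟨k, hkM, hk⟩ := exists_le_birkhoffSum_add_indicator (T := T) (f := f) h M z
  obtain ⟨m, rfl⟩ : ∃ m, n = (k + 1) + m := ⟨n - (k + 1), by omega⟩
  have hshift : ∑ j ∈ Finset.Ico (m - (M + 1)) m, f 1 (T^[j] (T^[k + 1] z)) =
      ∑ j ∈ Finset.Ico (m - (M + 1) + (k + 1)) (m + (k + 1)), f 1 (T^[j] z) := by
    rw [← Finset.sum_Ico_add']
    simp only [Function.iterate_add_apply]
  refine (hf.add_le (k + 1) m z).trans ((add_le_add hk (ih m (by omega) _)).trans ?_)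
  rw [birkhoffSum_add T _ (k + 1) m, ← add_assoc, hshift]
  exact add_le_add_right
    (Finset.sum_le_sum_of_subset (Finset.Ico_subset_Ico (by omega) (by omega))) _

end IsSubadditiveProcess

end Tiling

section Kingman

variable {Z : Type*} [MeasurableSpace Z] {ν : Measure Z} {T : Z → Z}

theorem measurable_birkhoffSum {E : Type*} [AddCommMonoid E] [MeasurableSpace E] [MeasurableAdd₂ E]
    (hT : Measurable T) {g : Z → E} (hg : Measurable g) (n : ℕ) :
    Measurable (birkhoffSum T g n) :=
  Finset.measurable_fun_sum _ fun k _ => hg.comp (hT.iterate k)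

theorem lintegral_birkhoffSum (hT : MeasurePreserving T ν ν) {g : Z → ℝ≥0∞} (hg : Measurable g)
    (n : ℕ) : ∫⁻ z, birkhoffSum T g n z ∂ν = n * ∫⁻ z, g z ∂ν := by
  simp only [birkhoffSum]
  rw [lintegral_finsetSum (f := fun k z => g (T^[k] z)) _ fun k _ =>
    hg.comp (hT.measurable.iterate k)]
  simp [(hT.iterate _).lintegral_comp hg]

theorem ae_eq_const_of_ae_le_comp {β : Type*} [Nonempty β] [LinearOrder β] [TopologicalSpace β]
    [OrderTopology β] [SecondCountableTopology β] [MeasurableSpace β] [BorelSpace β]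
    [IsFiniteMeasure ν] (hT : Ergodic T ν) {u : Z → β} (hu : Measurable u)
    (h : ∀ᵐ z ∂ν, u z ≤ u (T z)) : ∃ c, ∀ᵐ z ∂ν, u z = c := by
  have : HasCountableSeparatingOn β (· ∈ Set.range Set.Ioi) Set.univ := .range_Ioi
  refine exists_eventuallyEq_const_of_forall_separating (· ∈ Set.range Set.Ioi) ?_
  rintro _ ⟨q, rfl⟩
  have hle : u ⁻¹' Set.Ioi q ≤ᵐ[ν] T ⁻¹' (u ⁻¹' Set.Ioi q) := by
    filter_upwards [h] with z hz hq using lt_of_lt_of_le hq hz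
  rcases hT.ae_empty_or_univ_of_ae_le_preimage (hu measurableSet_Ioi).nullMeasurableSet hle
    with h' | h'
  · exact .inr (measure_eq_zero_iff_ae_notMem.1 (ae_eq_empty.1 h'))
  · exact .inl (eventuallyEq_univ.1 h')

theorem tendsto_ennreal_const_div_natCast {C : ℝ≥0∞} (hC : C ≠ ∞) :
    Tendsto (fun n : ℕ => C / n) atTop (𝓝 0) := by
  simpa [div_eq_mul_inv] using
    ENNReal.Tendsto.const_mul ENNReal.tendsto_inv_nat_nhds_zero (Or.inr hC) (a := C)

theorem tendsto_lintegral_tsub_natCast {g : Z → ℝ≥0∞} (hg : Measurable g)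
    (hint : ∫⁻ z, g z ∂ν ≠ ∞) :
    Tendsto (fun R : ℕ => ∫⁻ z, (g z - R) ∂ν) atTop (𝓝 0) := by
  rw [← lintegral_zero (μ := ν)]
  refine tendsto_lintegral_of_dominated_convergence g (fun R => hg.sub measurable_const)
    (fun R => .of_forall fun z => tsub_le_self) hint ?_
  filter_upwards [ae_lt_top hg hint] with z hz
  obtain ⟨N, hN⟩ := ENNReal.exists_nat_gt hz.ne
  refine tendsto_const_nhds.congr' ?_
  filter_upwards [eventually_ge_atTop N] with R hR
  exact (tsub_eq_zero_of_le (hN.le.trans (by exact_mod_cast hR))).symm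

theorem measurableSet_untiled (hT : Measurable T) {f : ℕ → Z → ℝ≥0∞} (hf : ∀ n, Measurable (f n))
    {h : Z → ℝ≥0∞} (hh : Measurable h) (M : ℕ) : MeasurableSet (untiled T f h M) := by
  simp only [untiled, Set.ofPred_forall]
  exact .iInter fun k => .iInter fun _ => measurableSet_lt (measurable_birkhoffSum hT hh _) (hf _)

theorem tendsto_setLIntegral_untiled [IsFiniteMeasure ν] (hT : Measurable T) {f : ℕ → Z → ℝ≥0∞}
    (hf : ∀ n, Measurable (f n)) {h : Z → ℝ≥0∞} (hh : Measurable h)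
    (htile : ∀ᵐ z ∂ν, ∃ k, f (k + 1) z ≤ birkhoffSum T h (k + 1) z) {g : Z → ℝ≥0∞}
    (hint : ∫⁻ z, g z ∂ν ≠ ∞) :
    Tendsto (fun M => ∫⁻ z in untiled T f h M, g z ∂ν) atTop (𝓝 0) := by
  refine tendsto_setLIntegral_zero hint ?_
  have hnull : ν (⋂ M, untiled T f h M) = 0 := by
    refine measure_mono_null (fun z hz => ?_) (ae_iff.1 htile)
    rintro ⟨k, hk⟩
    exact hk.not_gt (Set.mem_iInter.1 hz k k le_rfl)
  rw [← hnull]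
  exact tendsto_measure_iInter_atTop
    (fun M => (measurableSet_untiled hT hf hh M).nullMeasurableSet)
    (fun _ _ hMN _ hz k hk => hz k (hk.trans hMN)) ⟨0, measure_ne_top _ _⟩

theorem lintegral_add_indicator_untiled (hT : Measurable T) {f : ℕ → Z → ℝ≥0∞}
    (hf : ∀ n, Measurable (f n)) {h : Z → ℝ≥0∞} (hh : Measurable h) (M : ℕ) :
    ∫⁻ z, (h + (untiled T f h M).indicator (f 1)) z ∂ν =
      ∫⁻ z, h z ∂ν + ∫⁻ z in untiled T f h M, f 1 z ∂ν := by
  simp only [Pi.add_apply]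
  rw [lintegral_add_left hh, lintegral_indicator (measurableSet_untiled hT hf hh M)]

theorem le_of_forall_natCast_mul_le {r x C : ℝ≥0∞} (hC : C ≠ ∞)
    (h : ∀ n : ℕ, n * r ≤ n * x + C) : r ≤ x := by
  have hle : ∀ᶠ n : ℕ in atTop, r ≤ x + C / n := by
    filter_upwards [eventually_gt_atTop 0] with n hn
    have hn0 : (n : ℝ≥0∞) ≠ 0 := by exact_mod_cast hn.ne'
    have := ENNReal.div_le_div_right (h n) n
    rwa [ENNReal.add_div, mul_comm, ENNReal.mul_div_cancel_right hn0 (by simp), mul_comm,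
      ENNReal.mul_div_cancel_right hn0 (by simp)] at this
  have hlim : Tendsto (fun n : ℕ => x + C / n) atTop (𝓝 (x + 0)) :=
    tendsto_const_nhds.add (tendsto_ennreal_const_div_natCast hC)
  rw [add_zero] at hlim
  exact ge_of_tendsto hlim hle

variable [IsProbabilityMeasure ν]

namespace IsSubadditiveProcess

variable {f : ℕ → Z → ℝ≥0∞}

theorem limsup_div_ae_eq_const (hf : IsSubadditiveProcess T f) (hT : Ergodic T ν)
    (hm : ∀ n, Measurable (f n)) (hint : ∫⁻ z, f 1 z ∂ν ≠ ∞) :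
    ∃ c, ∀ᵐ z ∂ν, limsup (fun n : ℕ => f n z / n) atTop = c := by
  refine ae_eq_const_of_ae_le_comp hT (.limsup fun n => (hm n).div_const _) ?_
  filter_upwards [ae_lt_top (hm 1) hint] with z hz
  rw [← limsup_nat_add _ 1]
  refine (limsup_le_limsup (.of_forall fun n => hf.div_le_add n z)).trans_eq ?_
  exact ENNReal.limsup_add_of_right_tendsto_zero
    ((tendsto_ennreal_const_div_natCast hz.ne).comp (tendsto_add_atTop_nat 1)) _

theorem liminf_div_ae_eq_const (hf : IsSubadditiveProcess T f) (hT : Ergodic T ν)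
    (hm : ∀ n, Measurable (f n)) (hint : ∫⁻ z, f 1 z ∂ν ≠ ∞) :
    ∃ c, ∀ᵐ z ∂ν, liminf (fun n : ℕ => f n z / n) atTop = c := by
  refine ae_eq_const_of_ae_le_comp hT (.liminf fun n => (hm n).div_const _) ?_
  filter_upwards [ae_lt_top (hm 1) hint] with z hz
  rw [← liminf_nat_add _ 1]
  refine (liminf_le_liminf (.of_forall fun n => hf.div_le_add n z)).trans_eq ?_
  exact ENNReal.liminf_add_of_right_tendsto_zero
    ((tendsto_ennreal_const_div_natCast hz.ne).comp (tendsto_add_atTop_nat 1)) _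

end IsSubadditiveProcess

theorem le_lintegral_of_ae_exists_mul_le_birkhoffSum (hT : MeasurePreserving T ν ν) {g : Z → ℝ≥0∞}
    (hg : Measurable g) {r : ℝ≥0∞} (hr : r ≠ ∞)
    (h : ∀ᵐ z ∂ν, ∃ k : ℕ, ((k + 1 : ℕ) : ℝ≥0∞) * r ≤ birkhoffSum T g (k + 1) z) :
    r ≤ ∫⁻ z, g z ∂ν := by
  set f : ℕ → Z → ℝ≥0∞ := fun n _ => n * r
  have hf : IsSubadditiveProcess T f := isSubadditiveProcess_natCast_mul T r
  have hfm : ∀ n, Measurable (f n) := fun n => measurable_const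
  have hf1 : ∫⁻ z, f 1 z ∂ν = r := by simp [f]
  have hbound : ∀ M, r ≤ ∫⁻ z, g z ∂ν + ∫⁻ z in untiled T f g M, f 1 z ∂ν := by
    intro M
    refine le_of_forall_natCast_mul_le (C := (M + 1 : ℕ) * r) (by finiteness) fun n => ?_
    rw [← lintegral_add_indicator_untiled hT.measurable hfm hg, ← lintegral_birkhoffSum hT
      (hg.add ((hfm 1).indicator (measurableSet_untiled hT.measurable hfm hg M)))]
    calc (n : ℝ≥0∞) * r = ∫⁻ z, f n z ∂ν := by simp [f]
      _ ≤ ∫⁻ z, (birkhoffSum T (g + (untiled T f g M).indicator (f 1)) n z +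
            ∑ k ∈ Finset.Ico (n - (M + 1)) n, f 1 (T^[k] z)) ∂ν :=
        lintegral_mono fun z => hf.le_birkhoffSum_add_sum_Ico g M n z
      _ ≤ ∫⁻ z, (birkhoffSum T (g + (untiled T f g M).indicator (f 1)) n z +
            (M + 1 : ℕ) * r) ∂ν := by
        refine lintegral_mono fun z => add_le_add_right ?_ _
        simp only [f, Nat.cast_one, one_mul, Finset.sum_const, Nat.card_Ico, nsmul_eq_mul]
        gcongr
        omega
      _ = ∫⁻ z, birkhoffSum T (g + (untiled T f g M).indicator (f 1)) n z ∂ν +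
            (M + 1 : ℕ) * r := by
        rw [lintegral_add_right _ measurable_const]; simp
  have hlim := (tendsto_const_nhds (x := ∫⁻ z, g z ∂ν)).add
    (tendsto_setLIntegral_untiled hT.measurable hfm hg h (hf1.trans_ne hr))
  rw [add_zero] at hlim
  exact ge_of_tendsto' hlim hbound

theorem ae_limsup_birkhoffSum_div_le (hT : Ergodic T ν) {g : Z → ℝ≥0∞} (hg : Measurable g) :
    ∀ᵐ z ∂ν, limsup (fun n : ℕ => birkhoffSum T g n z / n) atTop ≤ ∫⁻ z, g z ∂ν := by
  rcases eq_or_ne (∫⁻ z, g z ∂ν) ∞ with hint | hint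
  · simp [hint]
  obtain ⟨u, hu⟩ := (isSubadditiveProcess_birkhoffSum T g).limsup_div_ae_eq_const hT
    (measurable_birkhoffSum hT.measurable hg) (by simpa using hint)
  suffices u ≤ ∫⁻ z, g z ∂ν by
    filter_upwards [hu] with z hz
    rwa [hz]
  refine le_of_forall_lt_imp_le_of_dense fun r hr => ?_
  refine le_lintegral_of_ae_exists_mul_le_birkhoffSum hT.toMeasurePreserving hg hr.ne_top ?_
  filter_upwards [hu] with z hz
  rw [← hz, ← limsup_nat_add _ 1] at hr
  obtain ⟨k, hk⟩ := (frequently_lt_of_lt_limsup (by isBoundedDefault) hr).exists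
  exact ⟨k, by simpa only [mul_comm] using ENNReal.mul_le_of_le_div hk.le⟩

theorem ae_tendsto_sum_Ico_div (hT : Ergodic T ν) {g : Z → ℝ≥0∞} (hg : Measurable g)
    (hint : ∫⁻ z, g z ∂ν ≠ ∞) (M : ℕ) :
    ∀ᵐ z ∂ν, Tendsto (fun n : ℕ => (∑ k ∈ Finset.Ico (n - M) n, g (T^[k] z)) / n) atTop (𝓝 0) := by
  have hle : ∀ (R n : ℕ) (z : Z), ∑ k ∈ Finset.Ico (n - M) n, g (T^[k] z) ≤
      birkhoffSum T (fun z => g z - R) n z + M * R := fun R n z => calc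
    ∑ k ∈ Finset.Ico (n - M) n, g (T^[k] z)
      ≤ ∑ k ∈ Finset.Ico (n - M) n, ((g (T^[k] z) - R) + R) :=
        Finset.sum_le_sum fun k _ => le_tsub_add
    _ = ∑ k ∈ Finset.Ico (n - M) n, (g (T^[k] z) - R) + (n - (n - M) : ℕ) * R := by
        rw [Finset.sum_add_distrib]; simp
    _ ≤ birkhoffSum T (fun z => g z - R) n z + M * R := by
        refine add_le_add (Finset.sum_le_sum_of_subset fun k hk => ?_) (by gcongr; omega)
        exact Finset.mem_range.2 (Finset.mem_Ico.1 hk).2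
  have hbirkhoff := ae_all_iff.2 fun R : ℕ =>
    ae_limsup_birkhoffSum_div_le hT (hg.sub (measurable_const (a := (R : ℝ≥0∞))))
  filter_upwards [hbirkhoff] with z hz
  refine tendsto_of_le_liminf_of_limsup_le zero_le ?_
  refine ge_of_tendsto' (tendsto_lintegral_tsub_natCast hg hint) fun R => ?_
  refine le_trans ?_ ((ENNReal.limsup_add_of_right_tendsto_zero
    (tendsto_ennreal_const_div_natCast (C := M * R) (by finiteness)) _).trans_le (hz R))
  refine limsup_le_limsup (.of_forall fun n => ?_)
  rw [Pi.add_apply, ← ENNReal.add_div]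
  exact ENNReal.div_le_div_right (hle R n z) _

namespace IsSubadditiveProcess

variable {f : ℕ → Z → ℝ≥0∞}

theorem ae_limsup_div_le_lintegral (hf : IsSubadditiveProcess T f) (hT : Ergodic T ν)
    (hm : ∀ n, Measurable (f n)) (hint : ∫⁻ z, f 1 z ∂ν ≠ ∞) {h : Z → ℝ≥0∞} (hh : Measurable h)
    (htile : ∀ᵐ z ∂ν, ∃ k, f (k + 1) z ≤ birkhoffSum T h (k + 1) z) :
    ∀ᵐ z ∂ν, limsup (fun n : ℕ => f n z / n) atTop ≤ ∫⁻ z, h z ∂ν := by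
  have hbirkhoff := ae_all_iff.2 fun M => ae_limsup_birkhoffSum_div_le hT
    (hh.add ((hm 1).indicator (measurableSet_untiled hT.measurable hm hh M)))
  have hboundary := ae_all_iff.2 fun M => ae_tendsto_sum_Ico_div hT (hm 1) hint (M + 1)
  filter_upwards [hbirkhoff, hboundary] with z hz hz'
  have hlim := (tendsto_const_nhds (x := ∫⁻ z, h z ∂ν)).add
    (tendsto_setLIntegral_untiled hT.measurable hm hh htile hint)
  rw [add_zero] at hlim
  refine ge_of_tendsto' hlim fun M => ?_
  rw [← lintegral_add_indicator_untiled hT.measurable hm hh]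
  refine le_trans ?_ ((ENNReal.limsup_add_of_right_tendsto_zero (hz' M) _).trans_le (hz M))
  refine limsup_le_limsup (.of_forall fun n => ?_)
  rw [Pi.add_apply, ← ENNReal.add_div]
  exact ENNReal.div_le_div_right (hf.le_birkhoffSum_add_sum_Ico h M n z) _

/-- If `r` exceeds the lower limit, then almost every orbit can be tiled by segments on which `f`
costs at most `r` per unit of time. -/
theorem ae_tendsto_div (hf : IsSubadditiveProcess T f) (hT : Ergodic T ν)
    (hm : ∀ n, Measurable (f n)) (hint : ∫⁻ z, f 1 z ∂ν ≠ ∞) :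
    ∃ c, ∀ᵐ z ∂ν, Tendsto (fun n : ℕ => f n z / n) atTop (𝓝 c) := by
  obtain ⟨c, hc⟩ := hf.liminf_div_ae_eq_const hT hm hint
  obtain ⟨u, hu⟩ := hf.limsup_div_ae_eq_const hT hm hint
  have huc : u ≤ c := by
    refine le_of_forall_gt_imp_ge_of_dense fun r hr => ?_
    have htile : ∀ᵐ z ∂ν, ∃ k, f (k + 1) z ≤ birkhoffSum T (fun _ => r) (k + 1) z := by
      filter_upwards [hc] with z hz
      rw [← hz, ← liminf_nat_add _ 1] at hr
      obtain ⟨k, hk⟩ := (frequently_lt_of_liminf_lt (by isBoundedDefault) hr).exists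
      refine ⟨k, ?_⟩
      simp only [birkhoffSum, Finset.sum_const, Finset.card_range, nsmul_eq_mul]
      rw [mul_comm]
      exact (ENNReal.div_le_iff_le_mul (.inl (by simp)) (.inl (by simp))).1 hk.le
    obtain ⟨z, hz, hz'⟩ :=
      (hu.and (hf.ae_limsup_div_le_lintegral hT hm hint measurable_const htile)).exists
    simpa [hz] using hz'
  refine ⟨c, ?_⟩
  filter_upwards [hc, hu] with z hz hz'
  exact tendsto_of_le_liminf_of_limsup_le hz.ge (hz'.trans_le huc)

end IsSubadditiveProcess

end Kingman

theorem tendsto_iInf_of_tendsto_max {α κ β : Type*} [CompleteLinearOrder β] [DenselyOrdered β]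
    [TopologicalSpace β] [OrderTopology β] {l : Filter α} {x : α → β} {v a : κ → β}
    (hv : ∀ b, ⊥ < b → ∃ k, v k < b)
    (h : ∀ k, Tendsto (fun n => max (x n) (v k)) l (𝓝 (a k))) :
    Tendsto x l (𝓝 (⨅ k, a k)) := by
  refine tendsto_order.2 ⟨fun b hb => ?_, fun b hb => ?_⟩
  · obtain ⟨b', hbb', hb'⟩ := exists_between hb
    obtain ⟨k, hk⟩ := hv b' (bot_le.trans_lt hbb')
    filter_upwards [(h k).eventually (lt_mem_nhds (hb'.trans_le (iInf_le a k)))] with n hn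
    exact hbb'.trans ((lt_max_iff.1 hn).resolve_right hk.not_gt)
  · obtain ⟨k, hk⟩ := iInf_lt_iff.1 hb
    filter_upwards [(h k).eventually (gt_mem_nhds hk)] with n hn
    exact (max_lt_iff.1 hn).1

section Recurrence

variable {Z : Type*} [MeasurableSpace Z] {ν : Measure Z} [IsProbabilityMeasure ν] {S : Z → Z}

theorem exists_frequently_frequently_iterate_mem (hS : MeasurePreserving S ν ν) {κ : Type*}
    [Countable κ] {E : κ → Set Z} (hE : ∀ k, MeasurableSet (E k)) (hcov : ∀ᵐ z ∂ν, ∃ k, z ∈ E k) :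
    ∃ k, ∃ᶠ z in ae ν, ∃ᶠ n in atTop, S^[n] z ∈ E k := by
  have hunion : ν (⋃ k, E k) ≠ 0 := by
    have : ν (⋃ k, E k) = 1 := by
      rw [← prob_compl_eq_zero_iff (.iUnion hE), ← mem_ae_iff]
      filter_upwards [hcov] with z hz using Set.mem_iUnion.2 hz
    simp [this]
  obtain ⟨k, hk⟩ := exists_measure_pos_of_not_measure_iUnion_null hunion
  refine ⟨k, ?_⟩
  exact ((frequently_ae_mem_iff.2 hk.ne').and_eventually
    (hS.conservative.ae_mem_imp_frequently_image_mem (hE k).nullMeasurableSet)).mono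
      fun z hz => hz.2 hz.1

/-- A typical orbit returns infinitely often to a set on which the convergence to `a` is uniform,
so along these return times `X n ∘ S^[n]` is near `a`. -/
theorem eq_of_ae_tendsto_comp_iterate (hS : MeasurePreserving S ν ν) {β : Type*}
    [TopologicalSpace β] [T2Space β] [MeasurableSpace β] [OpensMeasurableSpace β] {X : ℕ → Z → β}
    (hX : ∀ n, Measurable (X n)) {a b : β} (ha : ∀ᵐ z ∂ν, Tendsto (X · z) atTop (𝓝 a))
    (hb : ∀ᵐ z ∂ν, Tendsto (fun n => X n (S^[n] z)) atTop (𝓝 b)) : a = b := by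
  by_contra hab
  obtain ⟨U, V, hU, hV, haU, hbV, hUV⟩ := t2_separation hab
  obtain ⟨N, hN⟩ := exists_frequently_frequently_iterate_mem hS (κ := ℕ)
    (E := fun N => ⋂ n ≥ N, X n ⁻¹' U)
    (fun N => .iInter fun n => .iInter fun _ => hX n hU.measurableSet) (by
      filter_upwards [ha] with z hz
      obtain ⟨N, hN⟩ := eventually_atTop.1 (hz.eventually (hU.mem_nhds haU))
      exact ⟨N, Set.mem_iInter₂.2 hN⟩)
  obtain ⟨z, hz, hzb⟩ := (hN.and_eventually hb).exists
  obtain ⟨n, hnE, hnV, hnN⟩ := (hz.and_eventually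
    ((hzb.eventually (hV.mem_nhds hbV)).and (eventually_ge_atTop N))).exists
  exact hUV.le_bot ⟨Set.mem_iInter₂.1 hnE n hnN, hnV⟩

end Recurrence

namespace MaxPlus

section Scale

theorem scale_mono (n : ℕ) : Monotone (scale n) := fun _ _ h =>
  mul_le_mul_of_nonneg_left h (EReal.coe_nonneg.2 (by positivity))

theorem scale_coe (n : ℕ) (x : ℝ) : scale n (x : EReal) = ((x / n : ℝ) : EReal) := by
  rw [scale, ← EReal.coe_mul, inv_mul_eq_div]

theorem scale_zero (n : ℕ) : scale n 0 = 0 := mul_zero _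

theorem scale_eq_div (n : ℕ) (x : EReal) : scale n x = x / n := by
  rw [scale, EReal.coe_inv, EReal.coe_natCast, EReal.div_eq_inv_mul]

theorem gc_scale_natCast_mul {n : ℕ} (hn : 0 < n) :
    GaloisConnection (scale n) ((n : EReal) * ·) := fun x y => by
  rw [scale_eq_div, EReal.div_le_iff_le_mul (by exact_mod_cast hn) (EReal.natCast_ne_top n)]

theorem scale_bot {n : ℕ} (hn : 0 < n) : scale n ⊥ = ⊥ :=
  (gc_scale_natCast_mul hn).l_bot

theorem scale_iSup {n : ℕ} (hn : 0 < n) {κ : Sort*} (x : κ → EReal) :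
    scale n (⨆ k, x k) = ⨆ k, scale n (x k) :=
  (gc_scale_natCast_mul hn).l_iSup

theorem scale_add (n : ℕ) (x y : EReal) : scale n (x + y) = scale n x + scale n y :=
  EReal.left_distrib_of_nonneg_of_ne_top (EReal.coe_nonneg.2 (by positivity))
    (EReal.coe_ne_top _) _ _

theorem measurable_scale (n : ℕ) : Measurable (scale n) :=
  (scale_mono n).measurable

theorem scale_le_coe_iff {n : ℕ} (hn : 0 < n) {x : EReal} {q : ℝ} :
    scale n x ≤ q ↔ x ≤ ((q * n : ℝ) : EReal) := by
  rw [gc_scale_natCast_mul hn, EReal.coe_mul, mul_comm, EReal.coe_natCast]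

theorem scale_coe_ennreal {n : ℕ} (hn : 0 < n) (r : ℝ≥0∞) :
    scale n (r : EReal) = ((r / n : ℝ≥0∞) : EReal) := by
  have hinv : (((n : ℝ≥0∞)⁻¹ : ℝ≥0∞) : EReal) = (((n : ℝ)⁻¹ : ℝ) : EReal) := by
    rw [← ENNReal.ofReal_natCast, ← ENNReal.ofReal_inv_of_pos (by exact_mod_cast hn),
      EReal.coe_ennreal_ofReal, max_eq_left (by positivity)]
  rw [scale, ← hinv, ← EReal.coe_ennreal_mul, div_eq_mul_inv, mul_comm]

theorem exists_forall_le_of_tendsto_scale {x : ℕ → EReal} {g : EReal}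
    (h : Tendsto (fun n => scale n (x n)) atTop (𝓝 g)) (hx : ∀ n, x n ≠ ⊤) {q : ℝ}
    (hq : g < q) : ∃ C : ℕ, ∀ n : ℕ, x n ≤ ((q * n + C : ℝ) : EReal) := by
  obtain ⟨N, hN⟩ := eventually_atTop.1 (h.eventually (gt_mem_nhds hq))
  obtain ⟨C, hC⟩ := exists_nat_ge (∑ n ∈ Finset.range (N + 1), |(x n).toReal - q * n|)
  refine ⟨C, fun n => ?_⟩
  rcases le_or_gt n N with hn | hn
  · refine (EReal.le_coe_toReal (hx n)).trans (EReal.coe_le_coe_iff.2 ?_)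
    have hle := Finset.single_le_sum (f := fun n : ℕ => |(x n).toReal - q * n|)
      (fun i _ => abs_nonneg _) (Finset.mem_range.2 (Nat.lt_succ_of_le hn))
    linarith [le_abs_self ((x n).toReal - q * n)]
  · refine ((scale_le_coe_iff (by omega)).1 (hN n hn.le).le).trans (EReal.coe_le_coe_iff.2 ?_)
    linarith

theorem le_of_frequently_le_of_tendsto_scale {x : ℕ → EReal} {g : EReal} {q C : ℝ}
    (h : Tendsto (fun n => scale n (x n)) atTop (𝓝 g))
    (hx : ∃ᶠ n : ℕ in atTop, x n ≤ ((q * n + C : ℝ) : EReal)) : g ≤ q := by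
  have hlim : Tendsto (fun n : ℕ => ((q + C / n : ℝ) : EReal)) atTop (𝓝 (q : ℝ)) := by
    refine (continuous_coe_real_ereal.tendsto q).comp ?_
    simpa using tendsto_const_nhds.add (tendsto_const_div_atTop_nhds_zero_nat C)
  refine le_of_tendsto_of_tendsto_of_frequently h hlim ?_
  refine (hx.and_eventually (eventually_gt_atTop 0)).mono fun n ⟨hn, hn0⟩ => ?_
  have hn' : (n : ℝ) ≠ 0 := by exact_mod_cast hn0.ne'
  refine (scale_mono n hn).trans_eq ?_
  rw [scale_coe, add_div, mul_div_cancel_right₀ q hn']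

theorem scale_add_natCast_mul {n : ℕ} (hn : 0 < n) (x : EReal) (K : ℝ) :
    scale n (x + ((K * n : ℝ) : EReal)) = scale n x + K := by
  rw [scale_add, scale_coe, mul_div_cancel_right₀]
  exact_mod_cast hn.ne'

theorem max_scale_neg {n : ℕ} (hn : 0 < n) (x : EReal) (K : ℝ) :
    max (scale n x) ((-K : ℝ) : EReal) =
      (((x + ((K * n : ℝ) : EReal)).toENNReal / n : ℝ≥0∞) : EReal) + ((-K : ℝ) : EReal) := by
  rw [← scale_coe_ennreal hn, EReal.coe_toENNReal_eq_max, (scale_mono n).map_max,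
    scale_add_natCast_mul hn, scale_zero, ← max_add_add_right, zero_add, add_assoc,
    ← EReal.coe_add, add_neg_cancel, EReal.coe_zero, add_zero, max_comm]

theorem tendsto_scale_iSup {κ : Type*} [Finite κ] {x : ℕ → κ → EReal} {l : κ → EReal}
    (h : ∀ k, Tendsto (fun n => scale n (x n k)) atTop (𝓝 (l k))) :
    Tendsto (fun n => scale n (⨆ k, x n k)) atTop (𝓝 (⨆ k, l k)) := by
  have := Fintype.ofFinite κ
  have hsup : Tendsto (fun n => ⨆ k, scale n (x n k)) atTop (𝓝 (⨆ k, l k)) := by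
    simpa only [Finset.sup_univ_eq_iSup] using
      Tendsto.finset_sup_nhds_apply (s := Finset.univ) fun k _ => h k
  refine hsup.congr' ?_
  filter_upwards [eventually_gt_atTop 0] with n hn using (scale_iSup hn _).symm

theorem tendsto_scale_succ {x : ℕ → EReal} {l : EReal}
    (h : Tendsto (fun n => scale n (x n)) atTop (𝓝 l)) :
    Tendsto (fun n => scale (n + 1) (x n)) atTop (𝓝 l) := by
  have hratio : Tendsto (fun n : ℕ => ((n / (n + 1) : ℝ) : EReal)) atTop (𝓝 ((1 : ℝ) : EReal)) :=
    (continuous_coe_real_ereal.tendsto 1).comp (tendsto_natCast_div_add_atTop 1)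
  have hmul := (EReal.continuousAt_mul (p := (((1 : ℝ) : EReal), l)) (by simp) (by simp)
    (.inl (EReal.coe_ne_bot 1)) (.inl (EReal.coe_ne_top 1))).tendsto.comp (hratio.prodMk_nhds h)
  rw [EReal.coe_one, one_mul] at hmul
  refine hmul.congr' ?_
  filter_upwards [eventually_gt_atTop 0] with n hn
  have hn' : (n : ℝ) ≠ 0 := by exact_mod_cast hn.ne'
  rw [Function.comp_apply, scale, scale, ← mul_assoc, ← EReal.coe_mul]
  congr 2
  push_cast
  field_simp

theorem tendsto_scale_const_add {a : EReal} (ha : a ≠ ⊤) {x : ℕ → EReal} {l : EReal}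
    (h : Tendsto (fun n => scale n (x n)) atTop (𝓝 l)) :
    Tendsto (fun n => scale n (a + x n)) atTop (𝓝 (⨆ _ : a ≠ ⊥, l)) := by
  induction a with
  | top => exact absurd rfl ha
  | bot =>
    simp only [EReal.bot_add, ne_eq, not_true_eq_false, iSup_false]
    refine tendsto_const_nhds.congr' ?_
    filter_upwards [eventually_gt_atTop 0] with n hn using (scale_bot hn).symm
  | coe a =>
    have ha : Tendsto (fun n => scale n (a : EReal)) atTop (𝓝 0) := by
      simp only [scale_coe]
      exact (continuous_coe_real_ereal.tendsto 0).comp (tendsto_const_div_atTop_nhds_zero_nat a)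
    have hadd := (EReal.continuousAt_add (p := (0, l)) (by simp) (by simp)).tendsto.comp
      (ha.prodMk_nhds h)
    simpa [Function.comp_def, scale_add] using hadd

end Scale

end MaxPlus

open MaxPlus

section ExtendedKingman

variable {Z : Type*} {T : Z → Z} {F : ℕ → Z → EReal}

namespace IsSubadditiveProcess

theorem toENNReal_add_mul (hF : IsSubadditiveProcess T F) (K : ℝ) :
    IsSubadditiveProcess T fun n z => (F n z + ((K * n : ℝ) : EReal)).toENNReal where
  zero_le z := by simpa [EReal.toENNReal_eq_zero_iff] using hF.zero_le z
  add_le m n z := by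
    have hsplit :
        ((K * (m + n : ℕ) : ℝ) : EReal) = ((K * m : ℝ) : EReal) + ((K * n : ℝ) : EReal) := by
      rw [← EReal.coe_add, Nat.cast_add, mul_add]
    refine le_trans (EReal.toENNReal_le_toENNReal ?_) EReal.toENNReal_add_le
    rw [hsplit, add_add_add_comm]
    exact add_le_add_left (hF.add_le m n z) _

theorem toENNReal (hF : IsSubadditiveProcess T F) :
    IsSubadditiveProcess T fun n z => (F n z).toENNReal := by
  simpa using hF.toENNReal_add_mul 0

variable [MeasurableSpace Z] {ν : Measure Z}

theorem ae_forall_ne_top (hF : IsSubadditiveProcess T F) (hT : MeasurePreserving T ν ν)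
    (hm : Measurable (F 1)) (hint : ∫⁻ z, (F 1 z).toENNReal ∂ν ≠ ∞) :
    ∀ᵐ z ∂ν, ∀ n, F n z ≠ ⊤ := by
  have horbit : ∀ᵐ z ∂ν, ∀ k, (F 1 (T^[k] z)).toENNReal < ∞ := ae_all_iff.2 fun k =>
    (hT.iterate k).quasiMeasurePreserving.ae (ae_lt_top hm.ereal_toENNReal hint)
  filter_upwards [horbit] with z hz n htop
  have hle := hF.toENNReal.le_birkhoffSum n z
  rw [htop, EReal.toENNReal_top, top_le_iff] at hle
  exact (ENNReal.sum_lt_top.2 fun k _ => hz k).ne hle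

variable [IsProbabilityMeasure ν]

/-- The truncations `max (F n / n) (-K)` are nonnegative up to a translation. -/
theorem ae_tendsto_scale (hF : IsSubadditiveProcess T F) (hT : Ergodic T ν)
    (hm : ∀ n, Measurable (F n)) (hint : ∫⁻ z, (F 1 z).toENNReal ∂ν ≠ ∞) :
    ∃ g, ∀ᵐ z ∂ν, Tendsto (fun n => scale n (F n z)) atTop (𝓝 g) := by
  have htrunc : ∀ K : ℕ, ∃ c : ℝ≥0∞, ∀ᵐ z ∂ν,
      Tendsto (fun n : ℕ => (F n z + ((K * n : ℝ) : EReal)).toENNReal / n) atTop (𝓝 c) := by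
    refine fun K => (hF.toENNReal_add_mul K).ae_tendsto_div hT
      (fun n => ((hm n).add_const _).ereal_toENNReal) (ne_of_lt ?_)
    refine (lintegral_mono fun z => EReal.toENNReal_add_le).trans_lt ?_
    rw [lintegral_add_left (hm 1).ereal_toENNReal, lintegral_const, measure_univ, mul_one,
      EReal.real_coe_toENNReal]
    exact ENNReal.add_lt_top.2 ⟨hint.lt_top, ENNReal.ofReal_lt_top⟩
  choose c hc using htrunc
  refine ⟨⨅ K : ℕ, (c K : EReal) + ((-K : ℝ) : EReal), ?_⟩
  filter_upwards [ae_all_iff.2 hc] with z hz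
  refine tendsto_iInf_of_tendsto_max (v := fun K : ℕ => ((-K : ℝ) : EReal)) (fun b hb => ?_)
    fun K => ?_
  · obtain ⟨r, -, hr⟩ := EReal.lt_iff_exists_real_btwn.1 hb
    obtain ⟨K, hK⟩ := exists_nat_gt (-r)
    exact ⟨K, (EReal.coe_lt_coe_iff.2 (by linarith)).trans hr⟩
  · have hcoe := (continuous_coe_ennreal_ereal.tendsto _).comp (hz K)
    have hadd := (EReal.continuousAt_add (p := ((c K : EReal), ((-K : ℝ) : EReal)))
      (.inr (EReal.coe_ne_bot _)) (.inr (EReal.coe_ne_top _))).tendsto.comp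
      (hcoe.prodMk_nhds tendsto_const_nhds)
    refine hadd.congr' ?_
    filter_upwards [eventually_gt_atTop 0] with n hn using (max_scale_neg hn _ _).symm

end IsSubadditiveProcess

theorem IsSubadditiveProcess.comp_iterate {S : Z → Z} (hF : IsSubadditiveProcess S F)
    (hST : Function.LeftInverse S T) : IsSubadditiveProcess T fun n z => F n (T^[n] z) where
  zero_le z := hF.zero_le _
  add_le m n z := by
    rw [add_comm m n, add_comm (F m _), Function.iterate_add_apply]
    simpa only [(hST.iterate n) (T^[m] z)] using hF.add_le n m (T^[n] (T^[m] z))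

variable [MeasurableSpace Z] {ν : Measure Z} [IsProbabilityMeasure ν]

theorem IsSubadditiveProcess.ae_tendsto_scale_comp_iterate {e : Z ≃ᵐ Z}
    (hF : IsSubadditiveProcess e.symm F) (he : Ergodic e ν) (hm : ∀ n, Measurable (F n))
    (hint : ∫⁻ z, (F 1 z).toENNReal ∂ν ≠ ∞) :
    ∃ g, (∀ᵐ z ∂ν, Tendsto (fun n => scale n (F n z)) atTop (𝓝 g)) ∧
      ∀ᵐ z ∂ν, Tendsto (fun n => scale n (F n (e^[n] z))) atTop (𝓝 g) := by
  have hint' : ∫⁻ z, (F 1 (e^[1] z)).toENNReal ∂ν ≠ ∞ := by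
    simpa [he.toMeasurePreserving.lintegral_comp (hm 1).ereal_toENNReal] using hint
  obtain ⟨a, ha⟩ := hF.ae_tendsto_scale (Ergodic.symm he) hm hint
  obtain ⟨b, hb⟩ := (hF.comp_iterate e.left_inv).ae_tendsto_scale he
    (fun n => (hm n).comp (e.measurable.iterate n)) hint'
  obtain rfl : a = b := eq_of_ae_tendsto_comp_iterate he.toMeasurePreserving
    (fun n => (measurable_scale n).comp (hm n)) ha hb
  exact ⟨a, ha, hb⟩

theorem ae_exists_forall_comp_iterate_le (hT : Ergodic T ν) {u : Z → EReal} (hu : Measurable u)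
    (hint : ∫⁻ z, (u z).toENNReal ∂ν ≠ ∞) {ε : ℝ} (hε : 0 < ε) :
    ∀ᵐ z ∂ν, ∃ C : ℕ, ∀ n : ℕ, u (T^[n] z) ≤ ((ε * (n + 1) + C : ℝ) : EReal) := by
  have horbit : ∀ᵐ z ∂ν, ∀ k, (u (T^[k] z)).toENNReal < ∞ := ae_all_iff.2 fun k =>
    (hT.toMeasurePreserving.iterate k).quasiMeasurePreserving.ae
      (ae_lt_top hu.ereal_toENNReal hint)
  filter_upwards [horbit, ae_tendsto_sum_Ico_div hT hu.ereal_toENNReal hint 1] with z htop hlim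
  have hscale : Tendsto (fun n => scale n ((u (T^[n - 1] z)).toENNReal : EReal)) atTop (𝓝 0) := by
    refine ((continuous_coe_ennreal_ereal.tendsto 0).comp hlim).congr' ?_
    filter_upwards [eventually_gt_atTop 0] with n hn
    rw [scale_coe_ennreal hn, Function.comp_apply, Nat.Ico_pred_singleton hn,
      Finset.sum_singleton]
  obtain ⟨C, hC⟩ := exists_forall_le_of_tendsto_scale hscale
    (fun n => EReal.coe_ennreal_eq_top_iff.not.2 (htop _).ne) (q := ε) (by exact_mod_cast hε)
  refine ⟨C, fun n => ?_⟩
  calc u (T^[n] z) ≤ (u (T^[n] z)).toENNReal :=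
        (le_max_right 0 _).trans_eq EReal.coe_toENNReal_eq_max.symm
    _ ≤ ((ε * (n + 1) + C : ℝ) : EReal) := by simpa using hC (n + 1)

end ExtendedKingman

/-! ### Maximal weights of walks and their growth rates -/

theorem exists_reflTransGen_forall_reflTransGen {ι β : Type*} [Finite ι] (r : ι → ι → Prop)
    (L : ι → β) (i : ι) :
    ∃ k, Relation.ReflTransGen r i k ∧ L k = L i ∧
      ∀ j, Relation.ReflTransGen r k j → L j = L i → Relation.ReflTransGen r j k := by
  obtain ⟨k, ⟨hik, hLk⟩, hmin⟩ := Set.Finite.exists_minimalFor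
    (fun k => {j | Relation.ReflTransGen r k j}) {k | Relation.ReflTransGen r i k ∧ L k = L i}
    (Set.toFinite _) ⟨i, .refl, rfl⟩
  exact ⟨k, hik, hLk, fun j hkj hLj =>
    hmin ⟨hik.trans hkj, hLj⟩ (fun l hjl => hkj.trans hjl) .refl⟩

section BiSup

variable {κ β : Type*} [CompleteLinearOrder β] {s : Set κ}

theorem exists_mem_biSup_eq (hs : s.Finite) (hne : s.Nonempty) (x : κ → β) :
    ∃ k ∈ s, ⨆ k ∈ s, x k = x k := by
  have : Finite s := hs
  have : Nonempty s := hne.to_subtype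
  obtain ⟨k, hk⟩ := exists_eq_ciSup_of_finite (f := fun k : s => x k)
  exact ⟨k, k.2, by rw [hk, iSup_subtype']⟩

theorem biSup_eq_bot_or_exists_mem (hs : s.Finite) (x : κ → β) :
    ⨆ k ∈ s, x k = ⊥ ∨ ∃ k ∈ s, ⨆ k ∈ s, x k = x k := by
  rcases s.eq_empty_or_nonempty with rfl | hne
  · simp
  · exact .inr (exists_mem_biSup_eq hs hne x)

end BiSup

namespace MaxPlus

section Walks

variable {ι : Type*} {R s t U V : Set ι} {f : ℕ → Mat ι} {i : ι}

/-- The maximal weight of a walk of length `n` which starts at `i` and continues in `s`, the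
weight of the `k`-th step being given by `f k`; only the nodes after `i` are required to be
in `s`. -/
noncomputable def walkSup (s : Set ι) : ℕ → (ℕ → Mat ι) → ι → EReal
  | 0, _, _ => 0
  | n + 1, f, i => ⨆ j ∈ s, f 0 i j + walkSup s n (fun k => f (k + 1)) j

/-- The maximal weight of a walk of length `n` inside `s`. -/
noncomputable def walkSupOn (s : Set ι) (n : ℕ) (f : ℕ → Mat ι) : EReal :=
  ⨆ i ∈ s, walkSup s n f i

theorem add_walkSup_le_walkSup_succ {j : ι} (hj : j ∈ s) (n : ℕ) (f : ℕ → Mat ι) (i : ι) :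
    f 0 i j + walkSup s n (fun k => f (k + 1)) j ≤ walkSup s (n + 1) f i :=
  le_iSup₂ (f := fun j (_ : j ∈ s) => f 0 i j + walkSup s n (fun k => f (k + 1)) j) j hj

theorem walkSup_le_walkSupOn (hi : i ∈ s) (n : ℕ) (f : ℕ → Mat ι) :
    walkSup s n f i ≤ walkSupOn s n f :=
  le_iSup₂ (f := fun i (_ : i ∈ s) => walkSup s n f i) i hi

theorem walkSup_mono (h : s ⊆ t) (n : ℕ) (f : ℕ → Mat ι) (i : ι) :
    walkSup s n f i ≤ walkSup t n f i := by
  induction n generalizing f i with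
  | zero => exact le_rfl
  | succ n ih =>
    exact iSup₂_le fun j hj =>
      (add_le_add_right (ih _ j) _).trans (add_walkSup_le_walkSup_succ (h hj) n f i)

theorem walkSup_add_le (m n : ℕ) (f : ℕ → Mat ι) (hi : i ∈ s) :
    walkSup s (m + n) f i ≤ walkSup s m f i + walkSupOn s n fun k => f (k + m) := by
  induction m generalizing f i with
  | zero => simpa [walkSup] using walkSup_le_walkSupOn hi n f
  | succ m ih =>
    rw [Nat.succ_add]
    refine iSup₂_le fun j hj => ?_
    refine (add_le_add_right (ih (fun k => f (k + 1)) hj) _).trans ?_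
    rw [← add_assoc]
    exact add_le_add_left (add_walkSup_le_walkSup_succ hj m f i) _

theorem walkSupOn_add_le (s : Set ι) (m n : ℕ) (f : ℕ → Mat ι) :
    walkSupOn s (m + n) f ≤ walkSupOn s m f + walkSupOn s n fun k => f (k + m) :=
  iSup₂_le fun _ hi => (walkSup_add_le m n f hi).trans
    (add_le_add_left (walkSup_le_walkSupOn hi m f) _)

theorem walkSup_le_of_closed (hV : ∀ k, ∀ i ∈ V, ∀ j ∈ R, f k i j ≠ ⊥ → j ∈ V) (n : ℕ)
    (hi : i ∈ V) : walkSup R n f i ≤ walkSup V n f i := by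
  induction n generalizing f i with
  | zero => exact le_rfl
  | succ n ih =>
    refine iSup₂_le fun j hj => ?_
    by_cases hb : f 0 i j = ⊥
    · simp [hb]
    · have hjV := hV 0 i hi j hj hb
      exact (add_le_add_right (ih (fun k => hV (k + 1)) hjV) _).trans
        (add_walkSup_le_walkSup_succ hjV n f i)

variable [Finite ι]

/-- A walk in `R` which starts in `U` stays in `U` for some time `k`, and if it leaves `U` then
it enters `V` for good. -/
theorem exists_walkSup_le_add (hR : R ⊆ U ∪ V)
    (hV : ∀ k, ∀ i ∈ V, ∀ j ∈ R, f k i j ≠ ⊥ → j ∈ V) {n : ℕ} {c : ℕ → EReal} (hc0 : 0 ≤ c n)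
    (hc : ∀ k < n, ∀ i, ∀ j ∈ V,
      f k i j + walkSup V (n - (k + 1)) (fun l => f (l + (k + 1))) j ≤ c k) (hi : i ∈ U) :
    ∃ k ≤ n, walkSup R n f i ≤ walkSup U k f i + c k := by
  induction n generalizing f c i with
  | zero => exact ⟨0, le_rfl, by simpa [walkSup] using hc0⟩
  | succ n ih =>
    rcases biSup_eq_bot_or_exists_mem R.toFinite fun j =>
      f 0 i j + walkSup R n (fun k => f (k + 1)) j with hbot | ⟨j, hj, hmax⟩
    · exact ⟨0, Nat.zero_le _, by simp [walkSup, hbot]⟩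
    rw [walkSup, hmax]
    rcases hR hj with hjU | hjV
    · obtain ⟨k, hk, hle⟩ := ih (c := fun k => c (k + 1)) (fun k => hV (k + 1)) hc0
        (fun k hk i j hj => by simpa [add_assoc] using hc (k + 1) (by omega) i j hj) hjU
      refine ⟨k + 1, by omega, (add_le_add_right hle _).trans ?_⟩
      rw [← add_assoc]
      exact add_le_add_left (add_walkSup_le_walkSup_succ hjU k f i) _
    · refine ⟨0, Nat.zero_le _, ?_⟩
      calc f 0 i j + walkSup R n (fun k => f (k + 1)) j
          ≤ f 0 i j + walkSup V n (fun k => f (k + 1)) j :=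
            add_le_add_right (walkSup_le_of_closed (fun k => hV (k + 1)) n hjV) _
        _ ≤ walkSup U 0 f i + c 0 := by simpa [walkSup] using hc 0 (by omega) i j hjV

theorem walkSupOn_le_of_triangular (hR : R ⊆ U ∪ V)
    (hV : ∀ k, ∀ i ∈ V, ∀ j ∈ R, f k i j ≠ ⊥ → j ∈ V) {q ε : ℝ} (hε : 0 ≤ ε) {C₁ C₂ C₃ n : ℕ}
    (hU : ∀ k, walkSupOn U k f ≤ ((q * k + C₁ : ℝ) : EReal))
    (hf : ∀ k i j, f k i j ≤ ((ε * (k + 1) + C₂ : ℝ) : EReal))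
    (hVn : ∀ k ≤ n, walkSupOn V (n - k) (fun l => f (l + k)) ≤
      ((q * (n - k : ℕ) + C₃ : ℝ) : EReal)) :
    walkSupOn R n f ≤ (((q + ε) * n + (C₁ + C₂ + C₃ + 2 * |q|) : ℝ) : EReal) := by
  have hεn : 0 ≤ ε * n := by positivity
  have hq := abs_nonneg q
  have hq' := neg_abs_le q
  have hq'' := le_abs_self q
  refine iSup₂_le fun i hi => ?_
  rcases hR hi with hiU | hiV
  · have hexit : ∀ k < n, ∀ i, ∀ j ∈ V,
        f k i j + walkSup V (n - (k + 1)) (fun l => f (l + (k + 1))) j ≤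
          ((ε * n + C₂ + (q * (n - (k + 1)) + C₃) + |q| : ℝ) : EReal) := by
      refine fun k hk i j hj => (add_le_add (hf k i j)
        ((walkSup_le_walkSupOn hj _ _).trans (hVn (k + 1) hk))).trans ?_
      rw [← EReal.coe_add, EReal.coe_le_coe_iff, Nat.cast_sub hk]
      have hkn : ε * (k + 1) ≤ ε * n := by gcongr; exact_mod_cast hk
      push_cast
      linarith
    obtain ⟨k, -, hk⟩ := exists_walkSup_le_add hR hV
      (c := fun k => ((ε * n + C₂ + (q * (n - (k + 1)) + C₃) + |q| : ℝ) : EReal))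
      (EReal.coe_nonneg.2 (by linarith)) hexit hiU
    refine hk.trans ((add_le_add_left ((walkSup_le_walkSupOn hiU k f).trans (hU k)) _).trans ?_)
    rw [← EReal.coe_add, EReal.coe_le_coe_iff]
    linarith
  · have h := hVn 0 n.zero_le
    refine ((walkSup_le_of_closed hV n hiV).trans ((walkSup_le_walkSupOn hiV n f).trans h)).trans ?_
    rw [EReal.coe_le_coe_iff, Nat.sub_zero]
    linarith

theorem measurable_walkSup {Z : Type*} [MeasurableSpace Z] (s : Set ι) (n : ℕ)
    {f : ℕ → Z → Mat ι} (hf : ∀ k, Measurable (f k)) (i : ι) :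
    Measurable fun z => walkSup s n (fun k => f k z) i := by
  induction n generalizing f i with
  | zero => exact measurable_const
  | succ n ih =>
    refine .iSup fun j => .iSup fun _ => .add ?_ (ih (fun k => hf (k + 1)) j)
    exact (measurable_pi_apply j).comp ((measurable_pi_apply i).comp (hf 0))

theorem measurable_walkSupOn {Z : Type*} [MeasurableSpace Z] (s : Set ι) (n : ℕ)
    {f : ℕ → Z → Mat ι} (hf : ∀ k, Measurable (f k)) :
    Measurable fun z => walkSupOn s n fun k => f k z :=
  .iSup fun i => .iSup fun _ => measurable_walkSup s n hf i

end Walks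

section Shift

variable {α : Type*}

/-- The entries `z (-1), z (-2), …` of a two-sided sequence, read backwards. -/
def past (z : ℤ → α) : ℕ → α := fun k => z (-((k : ℤ) + 1))

variable [MeasurableSpace α]

/-- The shift on two-sided sequences, `(shift z) n = z (n + 1)`. -/
def shift : (ℤ → α) ≃ᵐ (ℤ → α) where
  toFun z n := z (n + 1)
  invFun z n := z (n - 1)
  left_inv z := by simp
  right_inv z := by simp
  measurable_toFun := measurable_pi_lambda _ fun n => measurable_pi_apply (n + 1)
  measurable_invFun := measurable_pi_lambda _ fun n => measurable_pi_apply (n - 1)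

theorem shift_iterate (m : ℕ) (z : ℤ → α) (n : ℤ) : shift^[m] z n = z (n + m) := by
  induction m generalizing z with
  | zero => simp
  | succ m ih =>
    rw [Function.iterate_succ_apply, ih]
    change z (n + m + 1) = _
    push_cast
    rw [add_assoc]

theorem shift_symm_iterate (m : ℕ) (z : ℤ → α) (n : ℤ) : shift.symm^[m] z n = z (n - m) := by
  have h : shift^[m] (shift.symm^[m] z) (n - m) = z (n - m) :=
    congrFun ((shift.right_inv.iterate m).leftInverse z) (n - m)
  rwa [shift_iterate, sub_add_cancel] at h

theorem past_shift_symm_iterate (m : ℕ) (z : ℤ → α) :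
    past (shift.symm^[m] z) = fun k => past z (k + m) := by
  funext k
  simp only [past, shift_symm_iterate]
  push_cast
  ring_nf

theorem shift_iterate_shift_symm_iterate {k n : ℕ} (hkn : k ≤ n) (z : ℤ → α) :
    shift^[n - k] (shift.symm^[n] z) = shift.symm^[k] z := by
  funext m
  simp only [shift_iterate, shift_symm_iterate]
  push_cast [hkn]
  ring_nf

theorem measurable_past (k : ℕ) : Measurable fun z : ℤ → α => past z k :=
  measurable_pi_apply _

theorem ae_forall_apply_of_ae_apply_zero {ν : Measure (ℤ → α)} (hν : MeasurePreserving shift ν ν)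
    {p : α → Prop} (hp : ∀ᵐ z ∂ν, p (z 0)) : ∀ᵐ z ∂ν, ∀ m, p (z m) := by
  refine ae_all_iff.2 fun m => ?_
  rcases Int.eq_nat_or_neg m with ⟨n, rfl | rfl⟩
  · filter_upwards [(hν.iterate n).quasiMeasurePreserving.ae hp] with z hz
    simpa [shift_iterate] using hz
  · filter_upwards [((hν.symm shift).iterate n).quasiMeasurePreserving.ae hp] with z hz
    simpa [shift_symm_iterate] using hz

end Shift

section Growth

variable {ι : Type*}

/-- `max_ij M_ij`. -/
noncomputable def maxEntry (M : Mat ι) : EReal := ⨆ i, ⨆ j, M i j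

theorem le_maxEntry (M : Mat ι) (i j : ι) : M i j ≤ maxEntry M :=
  le_iSup₂ (f := fun i j => M i j) i j

theorem maxEntry_ne_top [Finite ι] {M : Mat ι} (hM : ∀ i j, M i j ≠ ⊤) : maxEntry M ≠ ⊤ := by
  rcases isEmpty_or_nonempty ι with _ | _
  · simp [maxEntry]
  · obtain ⟨i, hi⟩ := exists_eq_ciSup_of_finite (f := fun i => ⨆ j, M i j)
    obtain ⟨j, hj⟩ := exists_eq_ciSup_of_finite (f := M i)
    rw [maxEntry, ← hi, ← hj]
    exact hM i j

theorem walkSupOn_one_le_maxEntry (s : Set ι) (f : ℕ → Mat ι) :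
    walkSupOn s 1 f ≤ maxEntry (f 0) :=
  iSup₂_le fun i _ => iSup₂_le fun j _ => by simpa [walkSup] using le_maxEntry (f 0) i j

theorem isSubadditiveProcess_walkSupOn_past (s : Set ι) :
    IsSubadditiveProcess shift.symm fun n (z : ℤ → Mat ι) => walkSupOn s n (past z) where
  zero_le _ := iSup₂_le fun _ _ => le_rfl
  add_le m n z := by
    simpa only [past_shift_symm_iterate] using walkSupOn_add_le s m n (past z)

variable {ν : Measure (ℤ → Mat ι)}

theorem lintegral_walkSupOn_one_ne_top (hint : ∫⁻ z, (maxEntry (past z 0)).toENNReal ∂ν ≠ ∞)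
    (s : Set ι) : ∫⁻ z, (walkSupOn s 1 (past z)).toENNReal ∂ν ≠ ∞ :=
  ((lintegral_mono fun z => EReal.toENNReal_le_toENNReal
    (walkSupOn_one_le_maxEntry s (past z))).trans_lt hint.lt_top).ne

variable [Finite ι]

theorem measurable_maxEntry : Measurable (maxEntry : Mat ι → EReal) :=
  .iSup fun i => .iSup fun j => (measurable_pi_apply j).comp (measurable_pi_apply i)

theorem measurable_walkSupOn_past (s : Set ι) (n : ℕ) :
    Measurable fun z : ℤ → Mat ι => walkSupOn s n (past z) :=
  measurable_walkSupOn s n measurable_past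

/-- `g` is the growth rate, under the law `ν`, of the largest entries of both products
`z (-1) ⊗ ⋯ ⊗ z (-n) ⊗ 0` and `z (n - 1) ⊗ ⋯ ⊗ z 0 ⊗ 0`, all matrices being restricted
to `s`; the second product is the first one at the point `shift^[n] z`. -/
structure IsGrowthRate (ν : Measure (ℤ → Mat ι)) (s : Set ι) (g : EReal) : Prop where
  backward : ∀ᵐ z ∂ν, Tendsto (fun n => scale n (walkSupOn s n (past z))) atTop (𝓝 g)
  forward : ∀ᵐ z ∂ν, Tendsto (fun n => scale n (walkSupOn s n (past (shift^[n] z)))) atTop (𝓝 g)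

theorem ae_forall_walkSupOn_ne_top (hν : Ergodic shift ν)
    (hint : ∫⁻ z, (maxEntry (past z 0)).toENNReal ∂ν ≠ ∞) (s : Set ι) :
    ∀ᵐ z ∂ν, ∀ n, walkSupOn s n (past z) ≠ ⊤ :=
  (isSubadditiveProcess_walkSupOn_past s).ae_forall_ne_top hν.symm.toMeasurePreserving
    (measurable_walkSupOn_past s 1) (lintegral_walkSupOn_one_ne_top hint s)

variable {R U V : Set ι} {gR gU gV : EReal}

theorem IsGrowthRate.ae_exists_forall_walkSupOn_le (hg : IsGrowthRate ν U gU)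
    (hν : Ergodic shift ν) (hint : ∫⁻ z, (maxEntry (past z 0)).toENNReal ∂ν ≠ ∞) {q : ℝ}
    (hq : gU < q) :
    ∀ᵐ z ∂ν, ∃ C : ℕ, ∀ n : ℕ, walkSupOn U n (past z) ≤ ((q * n + C : ℝ) : EReal) := by
  filter_upwards [hg.backward, ae_forall_walkSupOn_ne_top hν hint U] with z hlim htop
  exact exists_forall_le_of_tendsto_scale hlim htop hq

variable [IsProbabilityMeasure ν]

theorem exists_isGrowthRate (hν : Ergodic shift ν)
    (hint : ∫⁻ z, (maxEntry (past z 0)).toENNReal ∂ν ≠ ∞) (s : Set ι) :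
    ∃ g, IsGrowthRate ν s g := by
  obtain ⟨g, hback, hfwd⟩ := (isSubadditiveProcess_walkSupOn_past s).ae_tendsto_scale_comp_iterate
    hν (measurable_walkSupOn_past s) (lintegral_walkSupOn_one_ne_top hint s)
  exact ⟨g, hback, hfwd⟩

theorem ae_exists_forall_past_le (hν : Ergodic shift ν)
    (hint : ∫⁻ z, (maxEntry (past z 0)).toENNReal ∂ν ≠ ∞) {ε : ℝ} (hε : 0 < ε) :
    ∀ᵐ (z : ℤ → Mat ι) ∂ν, ∃ C : ℕ, ∀ k i j, past z k i j ≤ ((ε * (k + 1) + C : ℝ) : EReal) := by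
  filter_upwards [ae_exists_forall_comp_iterate_le hν.symm
    (measurable_maxEntry.comp (measurable_past 0)) hint hε] with z ⟨C, hC⟩
  refine ⟨C, fun k i j => (le_maxEntry _ i j).trans ?_⟩
  simpa [past_shift_symm_iterate] using hC k

/-- The forward products from a typical time `-n` obey a bound which does not depend on `n`, by
recurrence; they are all the tails of the backward product of length `n`. -/
theorem IsGrowthRate.exists_frequently_frequently_walkSupOn_le (hg : IsGrowthRate ν V gV)
    (hν : Ergodic shift ν) (hint : ∫⁻ z, (maxEntry (past z 0)).toENNReal ∂ν ≠ ∞) {q : ℝ}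
    (hq : gV < q) :
    ∃ C : ℕ, ∃ᶠ z in ae ν, ∃ᶠ n in atTop, ∀ k ≤ n,
      walkSupOn V (n - k) (fun l => past z (l + k)) ≤ ((q * (n - k : ℕ) + C : ℝ) : EReal) := by
  have htop : ∀ᵐ z ∂ν, ∀ n, walkSupOn V n (past (shift^[n] z)) ≠ ⊤ := by
    refine ae_all_iff.2 fun n => (hν.toMeasurePreserving.iterate n).quasiMeasurePreserving.ae
      (ae_all_iff.1 (ae_forall_walkSupOn_ne_top hν hint V) n)
  obtain ⟨C, hC⟩ := exists_frequently_frequently_iterate_mem hν.symm.toMeasurePreserving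
    (E := fun C : ℕ => {z | ∀ n : ℕ,
      walkSupOn V n (past (shift^[n] z)) ≤ ((q * n + C : ℝ) : EReal)})
    (fun C => by
      rw [Set.ofPred_forall]
      exact .iInter fun n => measurableSet_le
        ((measurable_walkSupOn_past V n).comp (shift.measurable.iterate n)) measurable_const)
    (by
      filter_upwards [hg.forward, htop] with z hlim htop
      exact exists_forall_le_of_tendsto_scale hlim htop hq)
  refine ⟨C, hC.mono fun z hz => hz.mono fun n hn k hk => ?_⟩
  simpa only [shift_iterate_shift_symm_iterate hk, past_shift_symm_iterate] using hn (n - k)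

theorem IsGrowthRate.le_max_of_triangular (hgR : IsGrowthRate ν R gR)
    (hgU : IsGrowthRate ν U gU) (hgV : IsGrowthRate ν V gV) (hν : Ergodic shift ν)
    (hint : ∫⁻ z, (maxEntry (past z 0)).toENNReal ∂ν ≠ ∞) (hR : R ⊆ U ∪ V)
    (hV : ∀ᵐ (z : ℤ → Mat ι) ∂ν, ∀ k, ∀ i ∈ V, ∀ j ∈ R, past z k i j ≠ ⊥ → j ∈ V) :
    gR ≤ max gU gV := by
  refine EReal.le_of_forall_lt_iff_le.1 fun r hr => ?_
  obtain ⟨q, hq, hqr⟩ := EReal.lt_iff_exists_real_btwn.1 hr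
  rw [EReal.coe_lt_coe_iff] at hqr
  obtain ⟨hqU, hqV⟩ := max_lt_iff.1 hq
  obtain ⟨C₃, hC₃⟩ := hgV.exists_frequently_frequently_walkSupOn_le hν hint hqV
  obtain ⟨z, hfreq, hz, hVz, ⟨C₁, hC₁⟩, C₂, hC₂⟩ := (hC₃.and_eventually
    (hgR.backward.and (hV.and ((hgU.ae_exists_forall_walkSupOn_le hν hint hqU).and
      (ae_exists_forall_past_le hν hint (sub_pos.2 hqr)))))).exists
  refine le_of_frequently_le_of_tendsto_scale (C := C₁ + C₂ + C₃ + 2 * |q|) hz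
    (hfreq.mono fun n hn => ?_)
  simpa only [add_sub_cancel] using
    walkSupOn_le_of_triangular hR hVz (sub_pos.2 hqr).le hC₁ hC₂ hn

end Growth

section Products

variable {ι : Type*}

theorem applyProd_restrict_zero (s : Set ι) (n : ℕ) (f : ℕ → Mat ι) (i : s) :
    applyProd n (fun k (i j : s) => f k i j) 0 i = walkSup s n f i := by
  induction n generalizing f i with
  | zero => rfl
  | succ n ih => simp only [applyProd, walkSup, mulVec, ih (fun k => f (k + 1)), iSup_subtype]

theorem xvec_eq_applyProd (z : ℤ → Mat ι) (n : ℕ) :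
    xvec z n = applyProd n (fun k => z (n - 1 - k)) 0 := by
  induction n with
  | zero => rfl
  | succ n ih =>
    rw [xvec, applyProd, ih]
    congr 2
    · push_cast; ring_nf
    · funext k; push_cast; ring_nf

theorem iSup_xvec_restrict (s : Set ι) (z : ℤ → Mat ι) (n : ℕ) :
    ⨆ i : s, xvec (fun m (i j : s) => z m i j) n i = walkSupOn s n (past (shift^[n] z)) := by
  have hpast : past (shift^[n] z) = fun k : ℕ => z (n - 1 - k) := by
    funext k
    rw [past, shift_iterate]
    ring_nf
  rw [xvec_eq_applyProd, walkSupOn, iSup_subtype', hpast]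
  exact iSup_congr fun i => applyProd_restrict_zero s n (fun k => z (n - 1 - k)) i

theorem yvec_eq_walkSup (z : ℤ → Mat ι) (n : ℕ) (i : ι) :
    yvec z n i = walkSup Set.univ n (past z) i := by
  suffices h : ∀ f : ℕ → Mat ι, applyProd n f 0 i = walkSup Set.univ n f i from h (past z)
  induction n generalizing i with
  | zero => exact fun _ => rfl
  | succ n ih => simp [applyProd, walkSup, mulVec, ih]

theorem yvec_succ (z : ℤ → Mat ι) (n : ℕ) (i : ι) :
    yvec z (n + 1) i = ⨆ j, z (-1) i j + yvec (shift.symm z) n j := by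
  have hpast : past (shift.symm z) = fun k => past z (k + 1) := past_shift_symm_iterate 1 z
  simp [yvec_eq_walkSup, walkSup, hpast, past]

theorem measurable_yvec [Finite ι] (n : ℕ) (i : ι) :
    Measurable fun z : ℤ → Mat ι => yvec z n i := by
  simpa only [yvec_eq_walkSup] using measurable_walkSup Set.univ n measurable_past i

end Products

section CycleTime

variable {ι : Type*}

/-- `L` is the cycle time vector of the law `ν`: the deterministic limit of `y(n, 0) / n`. -/
def IsCycleTime (ν : Measure (ℤ → Mat ι)) (L : ι → EReal) : Prop :=
  ∀ᵐ z ∂ν, ∀ i, Tendsto (fun n => scale n (yvec z n i)) atTop (𝓝 (L i))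

variable {ν : Measure (ℤ → Mat ι)} {L : ι → EReal} {R : Set ι} {g : EReal}

namespace IsCycleTime

theorem le_growthRate [NeZero ν] (hL : IsCycleTime ν L) (hg : IsGrowthRate ν R g)
    (hR : ∀ᵐ (z : ℤ → Mat ι) ∂ν, ∀ k, ∀ i ∈ R, ∀ j, past z k i j ≠ ⊥ → j ∈ R) {i : ι}
    (hi : i ∈ R) :
    L i ≤ g := by
  obtain ⟨z, hz, hgz, hRz⟩ := (hL.and (hg.backward.and hR)).exists
  refine le_of_tendsto_of_tendsto' (hz i) hgz fun n => scale_mono n ?_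
  rw [yvec_eq_walkSup]
  exact (walkSup_le_of_closed (fun k i hi j _ => hRz k i hi j) n hi).trans
    (walkSup_le_walkSupOn hi n _)

variable [Finite ι]

theorem ae_eq_iSup_entry_ne_bot (hL : IsCycleTime ν L) (hν : MeasurePreserving shift ν ν)
    (hint : ∫⁻ z, (maxEntry (past z 0)).toENNReal ∂ν ≠ ∞) :
    ∀ᵐ z ∂ν, ∀ i, L i = ⨆ j, ⨆ _ : z 0 i j ≠ ⊥, L j := by
  suffices h : ∀ᵐ (z : ℤ → Mat ι) ∂ν, ∀ i, L i = ⨆ j, ⨆ _ : past z 0 i j ≠ ⊥, L j by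
    filter_upwards [hν.quasiMeasurePreserving.ae h] with z hz
    exact hz
  filter_upwards [hL, (hν.symm shift).quasiMeasurePreserving.ae hL, ae_lt_top
    (measurable_maxEntry.comp (measurable_past 0)).ereal_toENNReal hint] with z hz hz' htop i
  have hentry : ∀ j, past z 0 i j ≠ ⊤ := fun j =>
    ne_top_of_le_ne_top (by simpa using htop.ne) (le_maxEntry (past z 0) i j)
  refine tendsto_nhds_unique ((tendsto_add_atTop_iff_nat 1).2 (hz i)) ?_
  simp only [yvec_succ]
  exact tendsto_scale_succ (tendsto_scale_iSup fun j => tendsto_scale_const_add (hentry j) (hz' j))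

theorem growthRate_le [NeZero ν] (hL : IsCycleTime ν L) (hg : IsGrowthRate ν R g) :
    g ≤ ⨆ i ∈ R, L i := by
  obtain ⟨z, hz, hgz⟩ := (hL.and hg.backward).exists
  rw [iSup_subtype']
  refine le_of_tendsto_of_tendsto' hgz (tendsto_scale_iSup fun i : R => hz i) fun n =>
    scale_mono n ?_
  rw [walkSupOn, iSup_subtype']
  refine iSup_mono fun i => ?_
  rw [yvec_eq_walkSup]
  exact walkSup_mono R.subset_univ n _ _

end IsCycleTime

end CycleTime

/-! ### Cycle times and the growth rates of components -/

section Graph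

variable {ι Ω : Type*} [MeasurableSpace Ω] {μ : Measure Ω} {A : ℤ → Ω → Mat ι}

theorem isSCC_setOf_reach (i : ι) : IsSCC μ A {j | Reach μ A i j ∧ Reach μ A j i} :=
  ⟨i, rfl⟩

theorem SetReach.trans_singleton {c c' : Set ι} {i : ι} (h : SetReach μ A c {i})
    (h' : SetReach μ A {i} c') : SetReach μ A c c' := by
  obtain ⟨a, ha, _, rfl, hai⟩ := h
  obtain ⟨_, rfl, b, hb, hib⟩ := h'
  exact ⟨a, ha, b, hb, hai.trans hib⟩

theorem SetReach.tail {c : Set ι} {i j : ι} (h : SetReach μ A c {i}) (hij : Arc μ A i j) :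
    SetReach μ A c {j} :=
  h.trans_singleton ⟨i, rfl, j, rfl, .single hij⟩

theorem gammaComp_le_gammaDown {c c' : Set ι} (hc' : IsSCC μ A c') (h : SetReach μ A c c') :
    gammaComp μ A c' ≤ gammaDown μ A c :=
  le_iSup₂ (f := fun c' (_ : c' ∈ {c' | IsSCC μ A c' ∧ SetReach μ A c c'}) => gammaComp μ A c')
    c' ⟨hc', h⟩

theorem gammaDown_singleton_le {c : Set ι} {i : ι} (h : SetReach μ A c {i}) :
    gammaDown μ A {i} ≤ gammaDown μ A c :=
  iSup₂_le fun _ hc' => gammaComp_le_gammaDown hc'.1 (h.trans_singleton hc'.2)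

variable [Finite ι]

theorem exists_isSCC_gammaComp_eq_gammaDown_singleton (i : ι) :
    ∃ c, IsSCC μ A c ∧ SetReach μ A {i} c ∧ gammaComp μ A c = gammaDown μ A {i} := by
  obtain ⟨c, ⟨hc, hic⟩, hmax⟩ := Set.exists_max_image {c | IsSCC μ A c ∧ SetReach μ A {i} c}
    (gammaComp μ A) (Set.toFinite _) ⟨_, isSCC_setOf_reach i, i, rfl, i, ⟨.refl, .refl⟩, .refl⟩
  exact ⟨c, hc, hic, (gammaComp_le_gammaDown hc hic).antisymm (iSup₂_le hmax)⟩

theorem mem_H_iff {c : Set ι} {i : ι} :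
    i ∈ H μ A c ↔ SetReach μ A c {i} ∧ gammaDown μ A {i} = gammaDown μ A c := by
  refine ⟨fun ⟨c', hc', hci, hic', heq⟩ => ⟨hci, (gammaDown_singleton_le hci).antisymm ?_⟩,
    fun ⟨hci, heq⟩ => ?_⟩
  · exact heq ▸ gammaComp_le_gammaDown hc' hic'
  · obtain ⟨c', hc', hic', hmax⟩ :=
      exists_isSCC_gammaComp_eq_gammaDown_singleton (μ := μ) (A := A) i
    exact ⟨c', hc', hci, hic', hmax.trans heq⟩

end Graph

section Law

variable {ι Ω : Type*} [MeasurableSpace Ω] {μ : Measure Ω} {A : ℤ → Ω → Mat ι} {L : ι → EReal}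

/-- The law of the two-sided sequence of random matrices `A`. -/
noncomputable def law (μ : Measure Ω) (A : ℤ → Ω → Mat ι) : Measure (ℤ → Mat ι) :=
  μ.map fun ω n => A n ω

theorem ae_forall_ne_bot_imp_arc [Finite ι] :
    ∀ᵐ ω ∂μ, ∀ i j, A 0 ω i j ≠ ⊥ → Arc μ A i j := by
  refine ae_all_iff.2 fun i => ae_all_iff.2 fun j => ?_
  by_cases h : Arc μ A i j
  · exact .of_forall fun _ _ => h
  · filter_upwards [ae_iff.2 (nonpos_iff_eq_zero.1 (not_lt.1 h))] with ω hω hne using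
      absurd hω hne

theorem aemeasurable_sequence (hmeas : ∀ n, Measurable (A n)) :
    AEMeasurable (fun ω n => A n ω) μ :=
  (measurable_pi_lambda _ hmeas).aemeasurable

theorem isProbabilityMeasure_law [IsProbabilityMeasure μ] (hmeas : ∀ n, Measurable (A n)) :
    IsProbabilityMeasure (law μ A) :=
  Measure.isProbabilityMeasure_map (aemeasurable_sequence hmeas)

theorem ae_law_forall_ne_bot_imp_arc [Finite ι] (hmeas : ∀ n, Measurable (A n))
    (herg : IsStationaryErgodic μ A) :
    ∀ᵐ z ∂law μ A, ∀ m i j, z m i j ≠ ⊥ → Arc μ A i j := by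
  refine ae_forall_apply_of_ae_apply_zero (p := fun M : Mat ι => ∀ i j, M i j ≠ ⊥ → Arc μ A i j)
    herg.toMeasurePreserving ?_
  refine (ae_map_iff (aemeasurable_sequence hmeas) ?_).2 ae_forall_ne_bot_imp_arc
  simp only [Set.ofPred_forall]
  refine .iInter fun i => .iInter fun j => measurableSet_setOfPred.2 (.imp ?_ measurable_const)
  have hm : Measurable fun z : ℤ → Mat ι => z 0 i j :=
    (measurable_pi_apply j).comp ((measurable_pi_apply i).comp (measurable_pi_apply 0))
  exact measurableSet_setOfPred.1 (hm (measurableSet_singleton ⊥)).compl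

theorem isCycleTime_law [Finite ι] (hmeas : ∀ n, Measurable (A n))
    (hL : ∀ᵐ ω ∂μ, ∀ i, Tendsto (fun n => scale n (yvec (fun m => A m ω) n i)) atTop (𝓝 (L i))) :
    IsCycleTime (law μ A) L := by
  refine (ae_map_iff (aemeasurable_sequence hmeas) ?_).2 hL
  rw [Set.ofPred_forall]
  exact .iInter fun i => measurableSet_tendsto _ fun n => (measurable_scale n).comp
    (measurable_yvec n i)

theorem lintegral_maxEntry_past_law [Finite ι] (hmeas : ∀ n, Measurable (A n))
    (herg : IsStationaryErgodic μ A) :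
    ∫⁻ z, (maxEntry (past z 0)).toENNReal ∂law μ A = ∫⁻ ω, (maxEntry (A 0 ω)).toENNReal ∂μ := by
  have hm : ∀ k, Measurable fun z : ℤ → Mat ι => (maxEntry (z k)).toENNReal := fun k =>
    (measurable_maxEntry.comp (measurable_pi_apply k)).ereal_toENNReal
  calc ∫⁻ z, (maxEntry (past z 0)).toENNReal ∂law μ A
      = ∫⁻ z, (maxEntry (z 0)).toENNReal ∂law μ A :=
        (herg.toMeasurePreserving.lintegral_comp (hm (-1))).symm
    _ = ∫⁻ ω, (maxEntry (A 0 ω)).toENNReal ∂μ :=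
        lintegral_map' (hm 0).aemeasurable (aemeasurable_sequence hmeas)

variable [Finite ι] (hmeas : ∀ n, Measurable (A n)) (herg : IsStationaryErgodic μ A)
  (hint : ∫⁻ ω, (maxEntry (A 0 ω)).toENNReal ∂μ ≠ ∞)
include hmeas herg hint

theorem IsCycleTime.ae_eq_iSup_apply_zero_ne_bot (hL : IsCycleTime (law μ A) L) :
    ∀ᵐ ω ∂μ, ∀ i, L i = ⨆ j, ⨆ _ : A 0 ω i j ≠ ⊥, L j :=
  ae_of_ae_map (aemeasurable_sequence hmeas) (hL.ae_eq_iSup_entry_ne_bot herg.toMeasurePreserving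
    ((lintegral_maxEntry_past_law hmeas herg).trans_ne hint))

theorem IsCycleTime.le_of_reach (hL : IsCycleTime (law μ A) L) {i j : ι} (hij : Reach μ A i j) :
    L j ≤ L i := by
  induction hij with
  | refl => exact le_rfl
  | @tail k l _ harc ih =>
    obtain ⟨ω, hω, hLω⟩ := ((frequently_ae_mem_iff.2 harc.ne').and_eventually
      (hL.ae_eq_iSup_apply_zero_ne_bot hmeas herg hint)).exists
    refine le_trans ?_ ih
    rw [hLω k]
    exact le_iSup₂ (f := fun j (_ : A 0 ω k j ≠ ⊥) => L j) l hω

variable [IsProbabilityMeasure μ]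

theorem isGrowthRate_gammaComp (s : Set ι) : IsGrowthRate (law μ A) s (gammaComp μ A s) := by
  have := isProbabilityMeasure_law (μ := μ) hmeas
  obtain ⟨g, hg⟩ := exists_isGrowthRate (ν := law μ A) herg
    ((lintegral_maxEntry_past_law hmeas herg).trans_ne hint) s
  suffices gammaComp μ A s = g by rwa [this]
  refine IsLyapunovExponent.lyapunov_eq ?_
  filter_upwards [ae_of_ae_map (aemeasurable_sequence hmeas) hg.forward] with ω hω
  simp only [← iSup_xvec_restrict] at hω
  exact hω

theorem gammaComp_le_max_of_closed {R U V : Set ι} (hR : R ⊆ U ∪ V)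
    (hV : ∀ i ∈ V, ∀ j ∈ R, Arc μ A i j → j ∈ V) :
    gammaComp μ A R ≤ max (gammaComp μ A U) (gammaComp μ A V) := by
  have := isProbabilityMeasure_law (μ := μ) hmeas
  have hγ := isGrowthRate_gammaComp hmeas herg hint
  refine (hγ R).le_max_of_triangular (hγ U) (hγ V) herg
    ((lintegral_maxEntry_past_law hmeas herg).trans_ne hint) hR ?_
  filter_upwards [ae_law_forall_ne_bot_imp_arc hmeas herg] with z hz k i hi j hj hij
  exact hV i hi j hj (hz _ i j hij)

namespace IsCycleTime

variable (hL : IsCycleTime (law μ A) L)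
include hL

theorem gammaComp_le (s : Set ι) : gammaComp μ A s ≤ ⨆ i ∈ s, L i := by
  have := isProbabilityMeasure_law (μ := μ) hmeas
  exact hL.growthRate_le (isGrowthRate_gammaComp hmeas herg hint s)

theorem le_gammaComp_of_closed {R : Set ι} (hR : ∀ i ∈ R, ∀ j, Arc μ A i j → j ∈ R) {i : ι}
    (hi : i ∈ R) : L i ≤ gammaComp μ A R := by
  have := isProbabilityMeasure_law (μ := μ) hmeas
  refine hL.le_growthRate (isGrowthRate_gammaComp hmeas herg hint R) ?_ hi
  filter_upwards [ae_law_forall_ne_bot_imp_arc hmeas herg] with z hz k i hi j hij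
  exact hR i hi j (hz _ i j hij)

theorem gammaDown_singleton_le (i : ι) : gammaDown μ A {i} ≤ L i := by
  refine iSup₂_le fun c hc => (hL.gammaComp_le hmeas herg hint c).trans
    (iSup₂_le fun k hk => hL.le_of_reach hmeas herg hint ?_)
  obtain ⟨⟨a, rfl⟩, _, rfl, b, hb, hib⟩ := hc
  exact hib.trans (hb.2.trans hk.1)

/-- Choose `k` reaching as few nodes as possible among the nodes reachable from `i` with
`L k = L i`. The nodes reachable from `k` then split into the component of `k` and a closed set on
which `L` is strictly smaller. -/
theorem le_gammaDown_singleton (i : ι) : L i ≤ gammaDown μ A {i} := by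
  have hmono : ∀ {i j}, Reach μ A i j → L j ≤ L i := hL.le_of_reach hmeas herg hint
  obtain ⟨k, hik, hLk, hk⟩ := exists_reflTransGen_forall_reflTransGen (Arc μ A) L i
  set R := {j | Reach μ A k j}
  set U := {j | Reach μ A k j ∧ Reach μ A j k}
  set V := {j ∈ R | L j < L i}
  have hR : R ⊆ U ∪ V := fun j hkj => by
    rcases ((hmono hkj).trans_eq hLk).lt_or_eq with hlt | heq
    · exact .inr ⟨hkj, hlt⟩
    · exact .inl ⟨hkj, hk j hkj heq⟩
  have hLR : L k ≤ gammaComp μ A R :=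
    hL.le_gammaComp_of_closed hmeas herg hint (fun a ha b hab => ha.tail hab) .refl
  have hRmax : gammaComp μ A R ≤ max (gammaComp μ A U) (gammaComp μ A V) :=
    gammaComp_le_max_of_closed hmeas herg hint hR fun a ha b hb hab =>
      ⟨hb, (hmono (.single hab)).trans_lt ha.2⟩
  rw [← hLk]
  rcases le_max_iff.1 (hLR.trans hRmax) with hU | hV
  · exact hU.trans (gammaComp_le_gammaDown (isSCC_setOf_reach k) ⟨i, rfl, k, ⟨.refl, .refl⟩, hik⟩)
  · have hLV := hV.trans (hL.gammaComp_le hmeas herg hint V)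
    rcases biSup_eq_bot_or_exists_mem V.toFinite L with hbot | ⟨j, hj, hLj⟩
    · exact (hLV.trans_eq hbot).trans bot_le
    · exact absurd ((hLk.ge.trans hLV).trans_eq hLj) hj.2.not_ge

theorem eq_gammaDown_singleton (i : ι) : L i = gammaDown μ A {i} :=
  (hL.le_gammaDown_singleton hmeas herg hint i).antisymm
    (hL.gammaDown_singleton_le hmeas herg hint i)

end IsCycleTime

end Law

end MaxPlus

theorem lintegral_toENNReal_ne_top_of_integrable {Ω : Type*} [MeasurableSpace Ω] {μ : Measure Ω}
    {u : Ω → EReal} (hu : ∀ ω, u ω ≠ ⊤) (hint : Integrable (fun ω => (u ω ⊔ 0).toReal) μ) :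
    ∫⁻ ω, (u ω).toENNReal ∂μ ≠ ∞ := by
  refine ne_of_lt (lt_of_eq_of_lt (lintegral_congr fun ω => ?_) hint.lintegral_lt_top)
  have htop : u ω ⊔ 0 ≠ ⊤ := (max_lt (hu ω).lt_top EReal.zero_lt_top).ne
  rw [← EReal.toENNReal_of_ne_top htop, sup_comm, ← EReal.coe_toENNReal_eq_max,
    EReal.toENNReal_coe]

theorem submatrix_row_finite_of_deterministic_y_limit_general
    {ι Ω : Type*} [Finite ι] [MeasurableSpace Ω] (μ : Measure Ω) [IsProbabilityMeasure μ]
    (A : ℤ → Ω → MaxPlus.Mat ι)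
    (hmeas : ∀ n, Measurable (A n))
    (herg : MaxPlus.IsStationaryErgodic μ A)
    (hrow : ∀ᵐ ω ∂μ, MaxPlus.RowFinite (A 0 ω))
    (hint : ∫⁻ ω, (maxEntry (A 0 ω)).toENNReal ∂μ ≠ ∞)
    (hlim : ∃ L : ι → EReal, ∀ᵐ ω ∂μ, ∀ i,
      Tendsto (fun n : ℕ => MaxPlus.scale n (MaxPlus.yvec (fun m => A m ω) n i))
        atTop (𝓝 (L i))) (c : Set ι) :
    ∀ᵐ ω ∂μ, MaxPlus.RowFinite (MaxPlus.sub A (MaxPlus.H μ A c) 0 ω) := by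
  obtain ⟨L, hlim⟩ := hlim
  have hL : IsCycleTime (law μ A) L := isCycleTime_law hmeas hlim
  have hγ : ∀ i, L i = gammaDown μ A {i} := hL.eq_gammaDown_singleton hmeas herg hint
  filter_upwards [hrow, ae_forall_ne_bot_imp_arc (μ := μ) (A := A),
    hL.ae_eq_iSup_apply_zero_ne_bot hmeas herg hint] with ω hrow harc hmax
  rintro ⟨i, hi⟩
  obtain ⟨hci, hi⟩ := mem_H_iff.1 hi
  obtain ⟨j, hij, hj⟩ := exists_mem_biSup_eq (Set.toFinite {j | A 0 ω i j ≠ ⊥}) (hrow i) L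
  have hLij : L i = L j := (hmax i).trans hj
  exact ⟨⟨j, mem_H_iff.2 ⟨hci.tail (harc i j hij), by rw [← hγ, ← hLij, hγ, hi]⟩⟩, hij⟩

theorem submatrix_row_finite_of_deterministic_y_limit
    {d : ℕ} {Ω : Type*} [MeasurableSpace Ω] (μ : Measure Ω) [IsProbabilityMeasure μ]
    (A : ℤ → Ω → MaxPlus.Mat (Fin d))
    (hmeas : ∀ n, Measurable (A n))
    (hnotop : ∀ n ω i j, A n ω i j ≠ ⊤)
    (herg : MaxPlus.IsStationaryErgodic μ A)
    (hrow : ∀ᵐ ω ∂μ, MaxPlus.RowFinite (A 0 ω))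
    (hint : Integrable (fun ω => ((⨆ i, ⨆ j, A 0 ω i j) ⊔ 0).toReal) μ)
    (hlim : ∃ L : Fin d → EReal, ∀ᵐ ω ∂μ, ∀ i,
      Tendsto (fun n : ℕ => MaxPlus.scale n (MaxPlus.yvec (fun m => A m ω) n i))
        atTop (𝓝 (L i))) :
    ∀ c : Set (Fin d), MaxPlus.IsSCC μ A c →
      ∀ᵐ ω ∂μ, MaxPlus.RowFinite (MaxPlus.sub A (MaxPlus.H μ A c) 0 ω) :=
  fun c _ => submatrix_row_finite_of_deterministic_y_limit_general μ A hmeas herg hrow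
    (lintegral_toENNReal_ne_top_of_integrable (fun ω => maxEntry_ne_top (hnotop 0 ω)) hint) hlim c
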